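/- If I(α,β) < 1, then exact recovery in HSBM(n,p,q;k) is impossible: for every estimator σ̂ mapping k-uniform hypergraphs on [n] to {±1}^n, Pr_{(σ,ℋ)∼HSBM(n,p,q;k)}(σ̂(ℋ) ∉ {σ, −σ}) = 1 − o(1) as n → ∞. -/

import Mathlib

open Finset Filter Matrix

open scoped Classical

/-- The `k`-element subsets of `[n]`, i.e. the potential hyperedges. -/
abbrev KSet (n k : ℕ) := {e : Finset (Fin n) // e.card = k}

/-- A `±1` label vector (encoded by `Bool`) is balanced if it has equally many
`+1`'s (`true`) and `-1`'s (`false`). -/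
abbrev balanced {n : ℕ} (σ : Fin n → Bool) : Prop :=
  2 * (Finset.univ.filter (fun i => σ i = true)).card = n

/-- `e` is in-cluster w.r.t. `σ`: `σ` is constant on `e`. -/
abbrev inCluster {n : ℕ} (σ : Fin n → Bool) (e : Finset (Fin n)) : Prop :=
  ∀ i ∈ e, ∀ j ∈ e, σ i = σ j

/-- Probability that `e` appears as an edge, given the labels `σ`. -/
noncomputable def edgeP {n : ℕ} (p q : ℝ) (σ : Fin n → Bool) (e : Finset (Fin n)) : ℝ :=
  if inCluster σ e then p else q

/-- Probability of observing exactly the hypergraph with edge-indicator `E`, given labels `σ`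
(edges appear independently). -/
noncomputable def hypProb {n k : ℕ} (p q : ℝ) (σ : Fin n → Bool) (E : KSet n k → Bool) : ℝ :=
  ∏ e : KSet n k, if E e then edgeP p q σ e.1 else 1 - edgeP p q σ e.1

/-- Uniform prior on balanced label vectors. -/
noncomputable def sigProb (n : ℕ) (σ : Fin n → Bool) : ℝ :=
  if balanced σ then 1 / ((Finset.univ.filter (fun τ : Fin n → Bool => balanced τ)).card : ℝ)
  else 0

/-- Probability of an event `P` under the joint law `HSBM(n,p,q;k)` of `(σ, ℋ)`. -/
noncomputable def prEvent (n k : ℕ) (p q : ℝ)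
    (P : (Fin n → Bool) → (KSet n k → Bool) → Prop) : ℝ :=
  ∑ σ : Fin n → Bool, ∑ E : KSet n k → Bool,
    sigProb n σ * hypProb p q σ E * (if P σ E then 1 else 0)

/-- Global sign flip. -/
def negB {n : ℕ} (σ : Fin n → Bool) : Fin n → Bool := fun i => !(σ i)

/-- The edge probability parameter `α · log n / C(n-1, k-1)`. -/
noncomputable def pParam (k : ℕ) (α : ℝ) (n : ℕ) : ℝ :=
  α * Real.log n / ((n - 1).choose (k - 1) : ℝ)

section ExpSec
set_option linter.unusedSectionVars false
variable {ι : Type*} [Fintype ι] [DecidableEq ι]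

/-- product Bernoulli weight -/
noncomputable def bw (w : ι → ℝ) (E : ι → Bool) : ℝ := ∏ e, if E e then w e else 1 - w e

/-- expectation under the product Bernoulli law -/
noncomputable def Ex (w : ι → ℝ) (F : (ι → Bool) → ℝ) : ℝ := ∑ E, bw w E * F E

lemma sum_prod_bool (f : ι → Bool → ℝ) :
    ∑ E : ι → Bool, ∏ e, f e (E e) = ∏ e, (f e true + f e false) := by
  have h := Finset.prod_univ_sum (fun _ : ι => (Finset.univ : Finset Bool)) f
  rw [Fintype.piFinset_univ] at h
  rw [← h]
  simp

lemma bw_nonneg {w : ι → ℝ} (h0 : ∀ e, 0 ≤ w e) (h1 : ∀ e, w e ≤ 1) (E : ι → Bool) :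
    0 ≤ bw w E := by
  unfold bw
  apply Finset.prod_nonneg
  intro e _
  split_ifs
  · exact h0 e
  · linarith [h1 e]

lemma Ex_prod (w : ι → ℝ) (g : ι → Bool → ℝ) :
    Ex w (fun E => ∏ e, g e (E e)) = ∏ e, (w e * g e true + (1 - w e) * g e false) := by
  unfold Ex bw
  simp_rw [← Finset.prod_mul_distrib]
  rw [sum_prod_bool (fun e b => (if b = true then w e else 1 - w e) * g e b)]
  simp

lemma bw_sum (w : ι → ℝ) : ∑ E, bw w E = 1 := by
  have := Ex_prod w (fun _ _ => 1)
  simpa [Ex] using this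

lemma Ex_mono {w : ι → ℝ} (h0 : ∀ e, 0 ≤ w e) (h1 : ∀ e, w e ≤ 1) {F G : (ι → Bool) → ℝ}
    (h : ∀ E, F E ≤ G E) : Ex w F ≤ Ex w G :=
  Finset.sum_le_sum fun E _ => mul_le_mul_of_nonneg_left (h E) (bw_nonneg h0 h1 E)

lemma Ex_const (w : ι → ℝ) (c : ℝ) : Ex w (fun _ => c) = c := by
  unfold Ex
  rw [← Finset.sum_mul, bw_sum, one_mul]

lemma Ex_add (w : ι → ℝ) (F G : (ι → Bool) → ℝ) :
    Ex w (fun E => F E + G E) = Ex w F + Ex w G := by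
  simp [Ex, mul_add, Finset.sum_add_distrib]

lemma Ex_sub (w : ι → ℝ) (F G : (ι → Bool) → ℝ) :
    Ex w (fun E => F E - G E) = Ex w F - Ex w G := by
  simp [Ex, mul_sub, Finset.sum_sub_distrib]

lemma Ex_smul (w : ι → ℝ) (c : ℝ) (F : (ι → Bool) → ℝ) :
    Ex w (fun E => c * F E) = c * Ex w F := by
  simp only [Ex, Finset.mul_sum]
  exact Finset.sum_congr rfl fun _ _ => by ring

lemma Ex_sum {κ : Type*} (w : ι → ℝ) (s : Finset κ) (F : κ → (ι → Bool) → ℝ) :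
    Ex w (fun E => ∑ a ∈ s, F a E) = ∑ a ∈ s, Ex w (F a) := by
  simp only [Ex, Finset.mul_sum]
  exact Finset.sum_comm

/-- combine configurations -/
def mixB (J : Set ι) [DecidablePred (· ∈ J)] (E E' : ι → Bool) : ι → Bool :=
  fun e => if e ∈ J then E e else E' e

lemma Ex_mul_indep (w : ι → ℝ) (J : Set ι) {F G : (ι → Bool) → ℝ}
    (hF : DependsOn F J) (hG : DependsOn G Jᶜ) :
    Ex w (fun E => F E * G E) = Ex w F * Ex w G := by
  classical
  have hmix1 : ∀ E E', F (mixB J E E') = F E := fun E E' => hF fun i hi => by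
    simp [mixB, hi]
  have hmix2 : ∀ E E', G (mixB J E E') = G E' := fun E E' => hG fun i hi => by
    have : i ∉ J := hi
    simp [mixB, this]
  have hw : ∀ E E', bw w (mixB J E E') * bw w (mixB J E' E) = bw w E * bw w E' := by
    intro E E'
    unfold bw
    rw [← Finset.prod_mul_distrib, ← Finset.prod_mul_distrib]
    refine Finset.prod_congr rfl fun e _ => ?_
    by_cases he : e ∈ J
    · simp [mixB, he]
    · simp only [mixB, he, if_false]
      ring
  have hinv : Function.Involutive
      (fun x : (ι → Bool) × (ι → Bool) => (mixB J x.1 x.2, mixB J x.2 x.1)) := by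
    rintro ⟨E, E'⟩
    simp only [Prod.mk.injEq]
    constructor <;> · funext e; by_cases he : e ∈ J <;> simp [mixB, he]
  have h1 : Ex w F * Ex w G =
      ∑ x : (ι → Bool) × (ι → Bool), bw w x.1 * bw w x.2 * (F x.1 * G x.2) := by
    unfold Ex
    rw [Finset.sum_mul_sum, ← Finset.univ_product_univ, Finset.sum_product]
    refine Finset.sum_congr rfl fun _ _ => Finset.sum_congr rfl fun _ _ => by ring
  have h2 : Ex w (fun E => F E * G E) =
      ∑ x : (ι → Bool) × (ι → Bool), bw w x.1 * bw w x.2 * (F x.1 * G x.1) := by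
    unfold Ex
    rw [← Finset.univ_product_univ, Finset.sum_product]
    refine Finset.sum_congr rfl fun E _ => ?_
    have : ∀ E', bw w E * bw w E' * (F E * G E) = bw w E' * (bw w E * (F E * G E)) :=
      fun E' => by ring
    simp_rw [this]
    rw [← Finset.sum_mul, bw_sum, one_mul]
  rw [h1, h2]
  rw [← Equiv.sum_comp (hinv.toPerm _)]
  refine Finset.sum_congr rfl fun x _ => ?_
  simp only [Function.Involutive.coe_toPerm]
  rw [hw, hmix1, hmix2]

lemma Ex_coord (w : ι → ℝ) (e₀ : ι) : Ex w (fun E => if E e₀ then 1 else 0) = w e₀ := by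
  have h := Ex_prod w (fun e b => if e = e₀ then (if b then 1 else 0) else 1)
  have h2 : ∀ E : ι → Bool, (∏ e, (if e = e₀ then (if E e then (1:ℝ) else 0) else 1))
      = if E e₀ then 1 else 0 := by
    intro E
    rw [Finset.prod_ite_eq' Finset.univ e₀ (fun e => if E e then (1:ℝ) else 0)]
    simp
  refine (congrArg (Ex w) (funext fun E => (h2 E).symm)).trans (h.trans ?_)
  have h3 : ∀ e, (w e * (if e = e₀ then (if true = true then (1:ℝ) else 0) else 1) +
      (1 - w e) * (if e = e₀ then (if false = true then 1 else 0) else 1))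
      = if e = e₀ then w e else 1 := by
    intro e; by_cases he : e = e₀ <;> simp [he]
  refine (Finset.prod_congr rfl fun e _ => h3 e).trans ?_
  rw [Finset.prod_ite_eq' Finset.univ e₀ w]
  simp

/-- number of present edges in `A` -/
def cnt (A : Finset ι) (E : ι → Bool) : ℕ := (A.filter fun e => E e = true).card

lemma Ex_pattern (w : ι → ℝ) (A S : Finset ι) (hS : S ⊆ A) (p : ℝ) (hp : ∀ e ∈ A, w e = p) :
    Ex w (fun E => if (A.filter fun e => E e = true) = S then 1 else 0)
      = p ^ S.card * (1 - p) ^ (A.card - S.card) := by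
  have h := Ex_prod w (fun e b => if e ∈ A then (if (b = true ↔ e ∈ S) then 1 else 0) else 1)
  have h2 : ∀ E : ι → Bool,
      (∏ e, (if e ∈ A then (if (E e = true ↔ e ∈ S) then (1:ℝ) else 0) else 1))
      = if (A.filter fun e => E e = true) = S then 1 else 0 := by
    intro E
    split_ifs with hh
    · apply Finset.prod_eq_one
      intro e _
      by_cases heA : e ∈ A
      · have : (E e = true ↔ e ∈ S) := by rw [← hh]; simp [heA]
        simp [heA, this]
      · simp [heA]
    · have : ∃ e ∈ A, ¬ (E e = true ↔ e ∈ S) := by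
        by_contra hcon
        push Not at hcon
        apply hh
        ext e
        simp only [Finset.mem_filter]
        constructor
        · rintro ⟨h1, h2⟩; exact (hcon e h1).1 h2
        · intro h1; exact ⟨hS h1, (hcon e (hS h1)).2 h1⟩
      obtain ⟨e, heA, he⟩ := this
      apply Finset.prod_eq_zero (Finset.mem_univ e)
      simp only [heA, he, if_true, if_false]
  refine (congrArg (Ex w) (funext fun E => (h2 E).symm)).trans (h.trans ?_)
  have h3 : ∀ e, (w e * (if e ∈ A then (if (true = true ↔ e ∈ S) then (1:ℝ) else 0) else 1) +
      (1 - w e) * (if e ∈ A then (if (false = true ↔ e ∈ S) then 1 else 0) else 1))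
      = if e ∈ A then (if e ∈ S then p else 1 - p) else 1 := by
    intro e
    by_cases heA : e ∈ A
    · by_cases heS : e ∈ S <;> simp [heA, heS, hp e heA]
    · simp [heA]
  refine (Finset.prod_congr rfl fun e _ => h3 e).trans ?_
  rw [Finset.prod_ite_mem, Finset.univ_inter, Finset.prod_ite, Finset.prod_const, Finset.prod_const]
  have e1 : A.filter (· ∈ S) = S := by
    ext e; simp only [Finset.mem_filter]; exact ⟨fun h => h.2, fun h => ⟨hS h, h⟩⟩
  have e2 : (A.filter (· ∉ S)).card = A.card - S.card := by
    rw [← Finset.card_sdiff_of_subset hS]; congr 1; ext e; simp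
  rw [e1, e2]

lemma Ex_cnt (w : ι → ℝ) (A : Finset ι) (p : ℝ) (hp : ∀ e ∈ A, w e = p) (t : ℕ) :
    Ex w (fun E => if cnt A E = t then 1 else 0)
      = A.card.choose t * (p ^ t * (1 - p) ^ (A.card - t)) := by
  have h : ∀ E : ι → Bool, (if cnt A E = t then (1:ℝ) else 0)
      = ∑ S ∈ A.powersetCard t, if (A.filter fun e => E e = true) = S then 1 else 0 := by
    intro E
    rw [Finset.sum_ite_eq]
    simp only [cnt, Finset.mem_powersetCard, Finset.filter_subset, true_and]
    congr
  simp_rw [h]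
  rw [Ex_sum]
  rw [Finset.sum_congr rfl (g := fun _ => p ^ t * (1 - p) ^ (A.card - t))]
  · rw [Finset.sum_const, Finset.card_powersetCard, nsmul_eq_mul]
  · intro S hS
    rw [Finset.mem_powersetCard] at hS
    rw [Ex_pattern w A S hS.1 p hp, hS.2]

lemma cnt_dependsOn (A : Finset ι) : DependsOn (cnt A) (A : Set ι) := by
  intro E E' h
  unfold cnt
  congr 1
  apply Finset.filter_congr
  intro e he
  rw [h e he]

lemma Ex_cnt_eq (w : ι → ℝ) (A B : Finset ι) (hAB : Disjoint A B) (N : ℕ) (hA : A.card = N)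
    (hB : B.card = N) (p q : ℝ) (hp : ∀ e ∈ A, w e = p) (hq : ∀ e ∈ B, w e = q) :
    Ex w (fun E => if cnt A E = cnt B E then 1 else 0)
      = ∑ t ∈ Finset.range (N + 1), (N.choose t * (p ^ t * (1 - p) ^ (N - t))) *
          (N.choose t * (q ^ t * (1 - q) ^ (N - t))) := by
  have h : ∀ E : ι → Bool, (if cnt A E = cnt B E then (1:ℝ) else 0)
      = ∑ t ∈ Finset.range (N + 1),
        (if cnt A E = t then 1 else 0) * (if cnt B E = t then 1 else 0) := by
    intro E
    have hlt : cnt A E ∈ Finset.range (N + 1) := by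
      rw [Finset.mem_range, ← hA]
      exact Nat.lt_succ_of_le (Finset.card_filter_le _ _)
    simp only [ite_mul, one_mul, zero_mul]
    rw [Finset.sum_ite_eq, if_pos hlt]
    simp only [eq_comm]
  simp_rw [h]
  rw [Ex_sum]
  refine Finset.sum_congr rfl fun t _ => ?_
  rw [Ex_mul_indep w (A : Set ι), Ex_cnt w A p hp, Ex_cnt w B q hq, hA, hB]
  · intro E E' h; simp only [cnt_dependsOn A h]
  · intro E E' h
    have : cnt B E = cnt B E' := cnt_dependsOn B fun e he => h e (by
      simp only [Set.mem_compl_iff, Finset.mem_coe]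
      exact fun h' => Finset.disjoint_left.1 hAB h' he)
    simp only [this]

/-- integrating out independent blocks -/
lemma Ex_blocks {κ : Type*} [DecidableEq κ] (w : ι → ℝ) (G : κ → Set ι) (Q : Set ι)
    (hGG : ∀ i j, i ≠ j → Disjoint (G i) (G j)) (hGQ : ∀ i, Disjoint (G i) Q)
    (D W : κ → (ι → Bool) → ℝ) (hD : ∀ i, DependsOn (D i) (G i)) (hW : ∀ i, DependsOn (W i) Q)
    (r : ℝ) (K : Finset κ) (hr : ∀ i ∈ K, Ex w (D i) = r) :
    ∀ Φ : (ι → Bool) → ℝ, DependsOn Φ Q →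
    Ex w (fun E => Φ E * ∏ i ∈ K, (1 - W i E * D i E))
      = Ex w (fun E => Φ E * ∏ i ∈ K, (1 - r * W i E)) := by
  induction K using Finset.induction_on with
  | empty => intro Φ _; simp
  | insert i K hi ih =>
    intro Φ hΦ
    have ih' := ih (fun j hj => hr j (Finset.mem_insert_of_mem hj))
    have hri := hr i (Finset.mem_insert_self i K)
    simp_rw [Finset.prod_insert hi]
    have e1 : Ex w (fun E => Φ E * ((1 - W i E * D i E) * ∏ j ∈ K, (1 - W j E * D j E)))
        = Ex w (fun E => Φ E * ∏ j ∈ K, (1 - W j E * D j E))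
          - Ex w (fun E => D i E * (Φ E * W i E * ∏ j ∈ K, (1 - W j E * D j E))) := by
      rw [← Ex_sub]; congr 1; funext E; ring
    have e2 : Ex w (fun E => D i E * (Φ E * W i E * ∏ j ∈ K, (1 - W j E * D j E)))
        = r * Ex w (fun E => Φ E * W i E * ∏ j ∈ K, (1 - W j E * D j E)) := by
      rw [Ex_mul_indep w (G i) (hD i), hri]
      intro E E' h
      have hQ : ∀ e ∈ Q, E e = E' e := fun e he => h e (fun h' =>
        Set.disjoint_left.1 (hGQ i) h' he)
      have hG : ∀ j ∈ K, ∀ e ∈ G j, E e = E' e := fun j hj e he => h e (fun h' =>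
        Set.disjoint_left.1 (hGG i j (by rintro rfl; exact hi hj)) h' he)
      simp only []
      rw [hΦ hQ, hW i hQ]
      congr 1
      refine Finset.prod_congr rfl fun j hj => ?_
      rw [hW j hQ, hD j (hG j hj)]
    have hΦW : DependsOn (fun E => Φ E * W i E) Q := by
      intro E E' h
      simp only []
      rw [hΦ h, hW i h]
    rw [e1, e2, ih' Φ hΦ, ih' _ hΦW, ← Ex_smul, ← Ex_sub]
    congr 1; funext E; ring

end ExpSec
section Analytic

lemma bin_eq_lower (N T : ℕ) (p q : ℝ) (hp0 : 0 ≤ p) (hp1 : p ≤ 1) (hq0 : 0 ≤ q) (hq1 : q ≤ 1)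
    (hs : 1 / 2 ≤ √(p * q) + √((1 - p) * (1 - q)))
    (hT : 4 * (N * √(p * q)) + 1 ≤ T) :
    ((√(p * q) + √((1 - p) * (1 - q))) ^ N) ^ 2 / (4 * T) ≤
      ∑ t ∈ Finset.range (N + 1), (N.choose t * (p ^ t * (1 - p) ^ (N - t))) *
          (N.choose t * (q ^ t * (1 - q) ^ (N - t))) := by
  set x := √(p * q) with hx
  set y := √((1 - p) * (1 - q)) with hy
  have hx0 : 0 ≤ x := Real.sqrt_nonneg _
  have hy0 : 0 ≤ y := Real.sqrt_nonneg _
  have hx2 : x ^ 2 = p * q := Real.sq_sqrt (mul_nonneg hp0 hq0)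
  have hy2 : y ^ 2 = (1 - p) * (1 - q) :=
    Real.sq_sqrt (mul_nonneg (by linarith) (by linarith))
  set c : ℕ → ℝ := fun t => x ^ t * y ^ (N - t) * N.choose t with hc
  have hc0 : ∀ t, 0 ≤ c t := fun t => by positivity
  have hcsq : ∀ t, (N.choose t * (p ^ t * (1 - p) ^ (N - t))) *
          (N.choose t * (q ^ t * (1 - q) ^ (N - t))) = c t ^ 2 := by
    intro t
    have : c t ^ 2 = (x ^ 2) ^ t * (y ^ 2) ^ (N - t) * (N.choose t : ℝ) ^ 2 := by
      simp only [hc]; ring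
    rw [this, hx2, hy2, mul_pow, mul_pow]; ring
  simp_rw [hcsq]
  have hT0 : (0:ℝ) < T := by
    have : 0 ≤ 4 * (N * x) := by positivity
    linarith
  have hsum : ∑ t ∈ Finset.range (N + 1), c t = (x + y) ^ N := by
    rw [add_pow]
  have hsumE : ∑ t ∈ Finset.range (N + 1), Real.exp 1 ^ t * c t = (Real.exp 1 * x + y) ^ N := by
    rw [add_pow]
    refine Finset.sum_congr rfl fun t _ => ?_
    simp only [hc]; rw [mul_pow]; ring
  have hspos : 0 < x + y := by linarith
  have hexp : (Real.exp 1 * x + y) ^ N ≤ (x + y) ^ N * Real.exp (4 * (N * x)) := by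
    have h1 : Real.exp 1 * x + y ≤ (x + y) * Real.exp (4 * x) := by
      have he : Real.exp 1 ≤ 3 := Real.exp_one_lt_d9.le.trans (by norm_num)
      have h2 : 4 * x + 1 ≤ Real.exp (4 * x) := Real.add_one_le_exp _
      have h3 : (x + y) * (4 * x + 1) ≤ (x + y) * Real.exp (4 * x) :=
        mul_le_mul_of_nonneg_left h2 hspos.le
      nlinarith
    calc (Real.exp 1 * x + y) ^ N ≤ ((x + y) * Real.exp (4 * x)) ^ N := by
          apply pow_le_pow_left₀ _ h1
          positivity
      _ = _ := by
          rw [mul_pow, ← Real.exp_nat_mul]; congr 2; ring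
  set R := Finset.range (N + 1)
  have htail : ∑ t ∈ R.filter (fun t => ¬ t < T), c t ≤ (x + y) ^ N / 2 := by
    have h1 : ∑ t ∈ R.filter (fun t => ¬ t < T), c t ≤
        ∑ t ∈ R, Real.exp (-T) * (Real.exp 1 ^ t * c t) := by
      calc _ ≤ ∑ t ∈ R.filter (fun t => ¬ t < T), Real.exp (-T) * (Real.exp 1 ^ t * c t) := by
            refine Finset.sum_le_sum fun t ht => ?_
            have htT : T ≤ t := not_lt.1 (Finset.mem_filter.1 ht).2
            have htT' : (T:ℝ) ≤ t := by exact_mod_cast htT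
            rw [← mul_assoc, ← Real.exp_nat_mul, ← Real.exp_add]
            have : 1 ≤ Real.exp (-T + t * 1) := Real.one_le_exp (by linarith)
            nlinarith [hc0 t]
        _ ≤ _ := Finset.sum_le_sum_of_subset_of_nonneg (Finset.filter_subset _ _)
            (fun t _ _ => mul_nonneg (Real.exp_nonneg _)
              (mul_nonneg (pow_nonneg (Real.exp_nonneg _) _) (hc0 t)))
    rw [← Finset.mul_sum, hsumE] at h1
    have h2 : Real.exp (-T) * (Real.exp 1 * x + y) ^ N ≤
        (x + y) ^ N * Real.exp (-1) := by
      calc _ ≤ Real.exp (-T) * ((x + y) ^ N * Real.exp (4 * (N * x))) :=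
            mul_le_mul_of_nonneg_left hexp (Real.exp_nonneg _)
        _ = (x + y) ^ N * Real.exp (-T + 4 * (N * x)) := by rw [Real.exp_add]; ring
        _ ≤ _ := by
            apply mul_le_mul_of_nonneg_left _ (by positivity)
            apply Real.exp_le_exp.2; linarith
    have h3 : Real.exp (-1) ≤ 1 / 2 := by
      rw [Real.exp_neg, one_div]
      apply inv_anti₀ (by norm_num)
      linarith [Real.add_one_le_exp (1:ℝ)]
    have h4 : (x + y) ^ N * Real.exp (-1) ≤ (x + y) ^ N * (1 / 2) :=
      mul_le_mul_of_nonneg_left h3 (by positivity)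
    linarith
  have hhead : (x + y) ^ N / 2 ≤ ∑ t ∈ R.filter (fun t => t < T), c t := by
    have := Finset.sum_filter_add_sum_filter_not R (fun t => t < T) c
    rw [hsum] at this
    linarith
  have hcard : ((R.filter (fun t => t < T)).card : ℝ) ≤ T := by
    have : (R.filter (fun t => t < T)).card ≤ (Finset.range T).card :=
      Finset.card_le_card fun t ht => Finset.mem_range.2 (Finset.mem_filter.1 ht).2
    rw [Finset.card_range] at this
    exact_mod_cast this
  have hcs := sq_sum_le_card_mul_sum_sq (s := R.filter (fun t => t < T)) (f := c)
  have hsub : ∑ t ∈ R.filter (fun t => t < T), c t ^ 2 ≤ ∑ t ∈ R, c t ^ 2 :=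
    Finset.sum_le_sum_of_subset_of_nonneg (Finset.filter_subset _ _)
      (fun t _ _ => sq_nonneg _)
  have hnn : 0 ≤ ∑ t ∈ R, c t ^ 2 := Finset.sum_nonneg fun t _ => sq_nonneg _
  rw [div_le_iff₀ (by positivity)]
  have hsq : ((x + y) ^ N / 2) ^ 2 ≤ (∑ t ∈ R.filter (fun t => t < T), c t) ^ 2 :=
    pow_le_pow_left₀ (by positivity) hhead 2
  have h5 : ((R.filter (fun t => t < T)).card : ℝ) * ∑ t ∈ R.filter (fun t => t < T), c t ^ 2
      ≤ T * ∑ t ∈ R, c t ^ 2 :=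
    mul_le_mul hcard hsub (Finset.sum_nonneg fun t _ => sq_nonneg _) hT0.le
  nlinarith

lemma bhatt_lower (p q : ℝ) (hp0 : 0 ≤ p) (hp1 : p ≤ 1 / 2) (hq0 : 0 ≤ q) (hq1 : q ≤ 1 / 2) :
    1 - ((√p - √q) ^ 2 + (p - q) ^ 2) / 2 ≤ √(p * q) + √((1 - p) * (1 - q)) := by
  rw [Real.sqrt_mul hp0, Real.sqrt_mul (by linarith)]
  have h1 := Real.sq_sqrt hp0
  have h2 := Real.sq_sqrt hq0
  have h3 := Real.sq_sqrt (show 0 ≤ 1 - p by linarith)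
  have h4 := Real.sq_sqrt (show 0 ≤ 1 - q by linarith)
  have h5 : 1 / 2 ≤ √(1 - p) := Real.le_sqrt_of_sq_le (by norm_num; linarith)
  have h6 : 1 / 2 ≤ √(1 - q) := Real.le_sqrt_of_sq_le (by norm_num; linarith)
  set u := √(1 - p)
  set v := √(1 - q)
  have h7 : (u - v) ^ 2 ≤ (p - q) ^ 2 := by
    have : p - q = (v - u) * (v + u) := by nlinarith
    rw [this, mul_pow]
    have : 1 ≤ (v + u) ^ 2 := by nlinarith
    nlinarith [sq_nonneg (u - v)]
  nlinarith

lemma choose_half (m r : ℕ) (hm : 1 ≤ m) :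
    (2 * m - 1) * 2 ^ r * m.choose r ≤ 2 * m * (2 * m - 1).choose r := by
  induction r with
  | zero => simp
  | succ r ih =>
    -- C(m,r+1)(r+1) = C(m,r)(m-r)
    have h1 := Nat.choose_succ_right_eq m r
    have h2 := Nat.choose_succ_right_eq (2 * m - 1) r
    rcases Nat.eq_zero_or_pos r with rfl | hr
    · simp; nlinarith
    by_cases hmr : m ≤ r
    · rw [Nat.choose_eq_zero_of_lt (by omega)]; simp
    push Not at hmr
    have h3 : 2 * (m - r) ≤ 2 * m - 1 - r := by omega
    refine Nat.le_of_mul_le_mul_right (c := r + 1) ?_ (Nat.succ_pos r)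
    calc (2 * m - 1) * 2 ^ (r + 1) * m.choose (r + 1) * (r + 1)
        = (2 * m - 1) * 2 ^ (r + 1) * (m.choose (r + 1) * (r + 1)) := by ring
      _ = ((2 * m - 1) * 2 ^ r * m.choose r) * (2 * (m - r)) := by rw [h1]; ring
      _ ≤ (2 * m * (2 * m - 1).choose r) * (2 * m - 1 - r) := Nat.mul_le_mul ih h3
      _ = 2 * m * ((2 * m - 1).choose (r + 1) * (r + 1)) := by rw [h2]; ring
      _ = _ := by ring

lemma choose_big (k n : ℕ) (hk : 2 ≤ k) (hn : k ≤ n) : n - 1 ≤ (k - 1) * (n - 1).choose (k - 1) := by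
  obtain ⟨a, rfl⟩ : ∃ a, k = a + 2 := ⟨k - 2, by omega⟩
  obtain ⟨b, rfl⟩ : ∃ b, n = b + 2 := ⟨n - 2, by omega⟩
  have h := Nat.add_one_mul_choose_eq b a
  have h2 : 1 ≤ b.choose a := Nat.choose_pos (by omega)
  have e1 : a + 2 - 1 = a + 1 := by omega
  have e2 : b + 2 - 1 = b + 1 := by omega
  rw [e1, e2]
  nlinarith

lemma tendsto_2m : Tendsto (fun m : ℕ => ((2 * m : ℕ) : ℝ)) atTop atTop :=
  tendsto_natCast_atTop_atTop.comp (tendsto_id.const_mul_atTop' (by norm_num : 0 < 2))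

lemma log_div_tendsto : Tendsto (fun x : ℝ => Real.log x / (x - 1)) atTop (nhds 0) := by
  have h1 : (fun x : ℝ => Real.log x) =o[atTop] (fun x : ℝ => x) := Real.isLittleO_log_id_atTop
  have h2 : (fun x : ℝ => x) =O[atTop] (fun x : ℝ => x - 1) := by
    apply Asymptotics.IsBigO.of_bound 2
    filter_upwards [eventually_ge_atTop 2] with x hx
    rw [Real.norm_of_nonneg (by linarith), Real.norm_of_nonneg (by linarith)]
    linarith
  exact (h1.trans_isBigO h2).tendsto_div_nhds_zero

lemma z_tendsto (k : ℕ) (hk : 2 ≤ k) :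
    Tendsto (fun m : ℕ => Real.log ((2 * m : ℕ) : ℝ) / ((2 * m - 1).choose (k - 1) : ℝ))
      atTop (nhds 0) := by
  have h := (log_div_tendsto.comp tendsto_2m).const_mul ((k - 1 : ℕ) : ℝ)
  rw [mul_zero] at h
  refine squeeze_zero' ?_ ?_ h
  · filter_upwards with m
    exact div_nonneg (Real.log_natCast_nonneg _) (Nat.cast_nonneg _)
  · filter_upwards [eventually_ge_atTop k] with m hm
    have h1 := choose_big k (2 * m) hk (by omega)
    have h1' : ((2 * m : ℕ) : ℝ) - 1 ≤ ((k - 1 : ℕ) : ℝ) * ((2 * m - 1).choose (k - 1) : ℝ) := by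
      have : ((2 * m : ℕ) : ℝ) - 1 = ((2 * m - 1 : ℕ) : ℝ) := by
        rw [Nat.cast_sub (by omega)]; simp
      rw [this]; exact_mod_cast h1
    have h2 : (0:ℝ) < ((2 * m : ℕ) : ℝ) - 1 := by
      have : 2 ≤ 2 * m := by omega
      have : (2:ℝ) ≤ ((2 * m : ℕ) : ℝ) := by exact_mod_cast this
      linarith
    have h3 : (0:ℝ) < ((2 * m - 1).choose (k - 1) : ℝ) := by
      exact_mod_cast Nat.choose_pos (by omega)
    simp only [Function.comp]
    rw [← mul_div_assoc, div_le_div_iff₀ h3 h2]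
    have h4 := Real.log_natCast_nonneg (2 * m)
    nlinarith

lemma r_lower (k : ℕ) (hk : 2 ≤ k) (α β : ℝ) (hα : 0 < α) (hβ : 0 < β) (c : ℝ)
    (hc : (√α - √β) ^ 2 / 2 ^ (k - 1) < c) :
    ∀ᶠ m : ℕ in atTop, ∀ N ≤ m.choose (k - 1),
      Real.exp (-c * Real.log ((2 * m : ℕ) : ℝ)) ≤
      ∑ t ∈ Finset.range (N + 1),
        (N.choose t * (pParam k α (2 * m) ^ t * (1 - pParam k α (2 * m)) ^ (N - t))) *
          (N.choose t * (pParam k β (2 * m) ^ t * (1 - pParam k β (2 * m)) ^ (N - t))) := by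
  obtain ⟨c1, hc1, hc1c⟩ := exists_between hc
  set d := (√α - √β) ^ 2 with hd
  set e := (α - β) ^ 2 with he
  have hd0 : 0 ≤ d := sq_nonneg _
  have he0 : 0 ≤ e := sq_nonneg _
  set L : ℕ → ℝ := fun m => Real.log ((2 * m : ℕ) : ℝ) with hL
  set B : ℕ → ℝ := fun m => ((2 * m - 1).choose (k - 1) : ℝ) with hB
  set z : ℕ → ℝ := fun m => L m / B m with hz
  have hzt : Tendsto z atTop (nhds 0) := z_tendsto k hk
  have hLt : Tendsto L atTop atTop := Real.tendsto_log_atTop.comp tendsto_2m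
  set ρ : ℕ → ℝ := fun m => (2 ^ (k - 1))⁻¹ * (1 + 1 / (((2 * m : ℕ) : ℝ) - 1)) with hρ
  have hρt : Tendsto ρ atTop (nhds ((2 ^ (k - 1))⁻¹ * (1 + 0))) := by
    refine Tendsto.const_mul _ (Tendsto.const_add _ ?_)
    have : Tendsto (fun m : ℕ => ((2 * m : ℕ) : ℝ) - 1) atTop atTop :=
      tendsto_atTop_add_const_right _ (-1) tendsto_2m
    have h2 := this.inv_tendsto_atTop
    refine h2.congr fun m => ?_
    simp
  have hδt : Tendsto (fun m => (d * z m + e * z m ^ 2) / 2) atTop (nhds 0) := by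
    have := (((hzt.const_mul d).add ((hzt.pow 2).const_mul e)).div_const 2)
    simpa using this
  have hbr : Tendsto (fun m => ρ m * (d + e * z m) / (1 - (d * z m + e * z m ^ 2) / 2)) atTop
      (nhds (d / 2 ^ (k - 1))) := by
    have := (hρt.mul ((hzt.const_mul e).const_add d)).div (hδt.const_sub 1) (by norm_num)
    convert this using 2
    simp
    try ring
  have hT : ∀ᶠ m in atTop, 4 * (4 * √(α * β) * L m + 2) ≤ Real.exp ((c - c1) * L m) := by
    have h1 : Tendsto (fun x : ℝ => Real.exp ((c - c1) * x) / x ^ 1) atTop atTop := by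
      have := tendsto_exp_mul_div_rpow_atTop 1 (c - c1) (by linarith)
      simpa using this
    have h2 := (h1.comp hLt).eventually_ge_atTop (16 * √(α * β) + 8)
    filter_upwards [h2, hLt.eventually_ge_atTop 1] with m hm hm1
    simp only [Function.comp, pow_one] at hm
    rw [le_div_iff₀ (by linarith)] at hm
    nlinarith
  have hpa : Tendsto (fun m => α * z m) atTop (nhds 0) := by simpa using hzt.const_mul α
  have hqa : Tendsto (fun m => β * z m) atTop (nhds 0) := by simpa using hzt.const_mul β
  filter_upwards [hbr.eventually_lt_const hc1, hT, hpa.eventually_le_const (by norm_num : (0:ℝ) < 1/2),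
    hqa.eventually_le_const (by norm_num : (0:ℝ) < 1/2),
    hδt.eventually_le_const (by norm_num : (0:ℝ) < 1/2), eventually_ge_atTop k,
    hLt.eventually_ge_atTop 1] with m hbr hT hp1 hq1 hδ hmk hL1 N hN
  have hB0 : 0 < B m := by
    simp only [hB]
    exact_mod_cast Nat.choose_pos (by omega)
  have hz0 : 0 ≤ z m := div_nonneg (by linarith) hB0.le
  have hzB : z m * B m = L m := div_mul_cancel₀ _ hB0.ne'
  have hp : pParam k α (2 * m) = α * z m := by
    simp only [pParam, hz, hL, hB]; rw [mul_div_assoc]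
  have hq : pParam k β (2 * m) = β * z m := by
    simp only [pParam, hz, hL, hB]; rw [mul_div_assoc]
  rw [hp, hq]
  set p := α * z m with hpdef
  set q := β * z m with hqdef
  have hp0 : 0 ≤ p := by positivity
  have hq0 : 0 ≤ q := by positivity
  have hsq : (√p - √q) ^ 2 = d * z m := by
    rw [hpdef, hqdef, Real.sqrt_mul hα.le, Real.sqrt_mul hβ.le, ← sub_mul, mul_pow,
      Real.sq_sqrt hz0]
  have hpq2 : (p - q) ^ 2 = e * z m ^ 2 := by rw [hpdef, hqdef, he]; ring
  have hbh := bhatt_lower p q hp0 hp1 hq0 hq1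
  rw [hsq, hpq2] at hbh
  set δ := (d * z m + e * z m ^ 2) / 2 with hδdef
  have hδ0 : 0 ≤ δ := by positivity
  -- N ≤ ρ B
  have hNρ : (N : ℝ) ≤ ρ m * B m := by
    have h1 := choose_half m (k - 1) (by omega)
    have h2 : (2 * (m:ℝ) - 1) * 2 ^ (k - 1) * (m.choose (k - 1) : ℝ) ≤ 2 * m * B m := by
      have : (((2 * m - 1) * 2 ^ (k - 1) * m.choose (k - 1) : ℕ) : ℝ) ≤
        ((2 * m * (2 * m - 1).choose (k - 1) : ℕ) : ℝ) := by exact_mod_cast h1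
      push_cast [Nat.cast_sub (show 1 ≤ 2 * m by omega)] at this
      simpa using this
    have h3 : (N:ℝ) ≤ (m.choose (k - 1) : ℝ) := by exact_mod_cast hN
    have hm1 : (0:ℝ) < 2 * m - 1 := by
      have : (1:ℝ) ≤ m := by exact_mod_cast (by omega : 1 ≤ m)
      linarith
    have h4 : ρ m * B m = (2 * m * B m) / ((2 * m - 1) * 2 ^ (k - 1)) := by
      simp only [hρ]; push_cast; field_simp; ring
    rw [h4]
    refine h3.trans ?_
    rw [le_div_iff₀ (by positivity)]
    linarith
  have hNB : (N : ℝ) ≤ B m := by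
    have h1 : N ≤ (2 * m - 1).choose (k - 1) :=
      hN.trans (Nat.choose_le_choose _ (by omega))
    simp only [hB]; exact_mod_cast h1
  have hx : √(p * q) = √(α * β) * z m := by
    rw [show p * q = (α * β) * (z m) ^ 2 by rw [hpdef, hqdef]; ring,
      Real.sqrt_mul (by positivity), Real.sqrt_sq hz0]
  have hNx : N * √(p * q) ≤ √(α * β) * L m := by
    rw [hx, ← hzB]
    have : 0 ≤ √(α * β) * z m := by positivity
    nlinarith
  set T : ℕ := ⌈4 * (N * √(p * q)) + 1⌉₊ with hTdef
  have hTlb : 4 * (N * √(p * q)) + 1 ≤ T := Nat.le_ceil _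
  have hNx0 : 0 ≤ N * √(p * q) := by positivity
  have hTub : (T : ℝ) ≤ 4 * √(α * β) * L m + 2 := by
    have := (Nat.ceil_lt_add_one (show 0 ≤ 4 * (N * √(p * q)) + 1 by linarith)).le
    linarith
  have hT0 : (0:ℝ) < T := by linarith
  refine le_trans ?_ (bin_eq_lower N T p q hp0 (by linarith) hq0 (by linarith) (by linarith) hTlb)
  set s := √(p * q) + √((1 - p) * (1 - q))
  have hexp : Real.exp (-(δ / (1 - δ))) ≤ s := by
    refine le_trans ?_ hbh
    rw [Real.exp_neg]
    have h1 := Real.add_one_le_exp (δ / (1 - δ))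
    have h2 : δ / (1 - δ) + 1 = (1 - δ)⁻¹ := by
      have : 1 - δ ≠ 0 := by linarith
      field_simp; ring
    rw [h2] at h1
    exact inv_le_of_inv_le₀ (by linarith) h1
  have hsN : Real.exp (-(c1 * L m)) ≤ (s ^ N) ^ 2 := by
    have h1 : Real.exp (-(δ / (1 - δ))) ^ (N * 2) ≤ s ^ (N * 2) :=
      pow_le_pow_left₀ (Real.exp_nonneg _) hexp _
    rw [← pow_mul]
    refine le_trans ?_ h1
    rw [← Real.exp_nat_mul]
    apply Real.exp_le_exp.2
    push_cast
    have h2 : (N:ℝ) * 2 * (δ / (1 - δ)) ≤ c1 * L m := by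
      have h3 : ρ m * (d + e * z m) / (1 - δ) * L m ≤ c1 * L m :=
        mul_le_mul_of_nonneg_right hbr.le (by linarith)
      refine le_trans ?_ h3
      rw [mul_div_assoc', div_mul_eq_mul_div]
      apply div_le_div_of_nonneg_right _ (by linarith)
      have h5 : (N:ℝ) * 2 * δ = N * (z m * (d + e * z m)) := by rw [hδdef]; ring
      rw [h5, ← hzB]
      have h6 : 0 ≤ z m * (d + e * z m) := by positivity
      calc (N:ℝ) * (z m * (d + e * z m)) ≤ (ρ m * B m) * (z m * (d + e * z m)) :=
            mul_le_mul_of_nonneg_right hNρ h6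
        _ = _ := by ring
    linarith
  rw [le_div_iff₀ (by positivity)]
  refine le_trans ?_ hsN
  calc Real.exp (-c * L m) * (4 * T) ≤ Real.exp (-c * L m) * Real.exp ((c - c1) * L m) := by
        apply mul_le_mul_of_nonneg_left _ (Real.exp_nonneg _)
        linarith
    _ = _ := by rw [← Real.exp_add]; congr 1; ring

end Analytic
section ExpSec2
set_option linter.unusedSectionVars false
variable {ι : Type*} [Fintype ι] [DecidableEq ι]

lemma Ex_group {κ : Type*} [DecidableEq κ] (w : ι → ℝ) (h0 : ∀ e, 0 ≤ w e) (h1 : ∀ e, w e ≤ 1)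
    (G : κ → Set ι) (Q : Set ι)
    (hGG : ∀ i j, i ≠ j → Disjoint (G i) (G j)) (hGQ : ∀ i, Disjoint (G i) Q)
    (D W : κ → (ι → Bool) → ℝ) (hD : ∀ i, DependsOn (D i) (G i)) (hW : ∀ i, DependsOn (W i) Q)
    (hW0 : ∀ i E, 0 ≤ W i E) (hW1 : ∀ i E, W i E ≤ 1)
    (r : ℝ) (hr0 : 0 ≤ r) (hr1 : r ≤ 1) (K : Finset κ) (hr : ∀ i ∈ K, Ex w (D i) = r)
    (h : ℕ) (hh : 0 < h) (hK : K.card = h) (η : ℝ)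
    (hη : ∀ i ∈ K, Ex w (fun E => 1 - W i E) ≤ η) :
    Ex w (fun E => ∏ i ∈ K, (1 - W i E * D i E)) ≤ Real.exp (-(r * h / 2)) + 2 * η := by
  have e1 := Ex_blocks w G Q hGG hGQ D W hD hW r K hr (fun _ => 1) (fun _ _ _ => rfl)
  simp only [one_mul] at e1
  rw [e1]
  have hh' : (0:ℝ) < h := by exact_mod_cast hh
  have hpt : ∀ E, ∏ i ∈ K, (1 - r * W i E) ≤
      Real.exp (-(r * h / 2)) + (2 / h) * ∑ i ∈ K, (1 - W i E) := by
    intro E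
    have hnn : 0 ≤ (2 / (h:ℝ)) * ∑ i ∈ K, (1 - W i E) :=
      mul_nonneg (by positivity) (Finset.sum_nonneg fun i _ => by linarith [hW1 i E])
    have hf0 : ∀ i ∈ K, 0 ≤ 1 - r * W i E := fun i _ => by nlinarith [hW0 i E, hW1 i E]
    have hsum : ∑ i ∈ K, (1 - W i E) = h - ∑ i ∈ K, W i E := by
      rw [Finset.sum_sub_distrib]; simp [hK]
    by_cases hc : (h:ℝ) / 2 ≤ ∑ i ∈ K, W i E
    · have : ∏ i ∈ K, (1 - r * W i E) ≤ Real.exp (-(r * h / 2)) := by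
        calc ∏ i ∈ K, (1 - r * W i E) ≤ ∏ i ∈ K, Real.exp (-(r * W i E)) := by
              refine Finset.prod_le_prod hf0 fun i _ => ?_
              have := Real.add_one_le_exp (-(r * W i E)); linarith
          _ = Real.exp (-(r * ∑ i ∈ K, W i E)) := by
              rw [← Real.exp_sum, Finset.mul_sum, Finset.sum_neg_distrib]
          _ ≤ _ := by apply Real.exp_le_exp.2; nlinarith
      linarith
    · have h2 : ∏ i ∈ K, (1 - r * W i E) ≤ 1 :=
        Finset.prod_le_one hf0 fun i _ => by nlinarith [hW0 i E]
      have h3 : 1 ≤ (2 / (h:ℝ)) * ∑ i ∈ K, (1 - W i E) := by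
        rw [hsum, div_mul_eq_mul_div, le_div_iff₀ hh']; linarith
      linarith [Real.exp_nonneg (-(r * h / 2))]
  refine (Ex_mono h0 h1 hpt).trans ?_
  rw [Ex_add, Ex_const, Ex_smul, Ex_sum]
  have : ∑ i ∈ K, Ex w (fun E => 1 - W i E) ≤ h * η := by
    refine (Finset.sum_le_card_nsmul K _ η hη).trans ?_
    rw [hK, nsmul_eq_mul]
  have h4 : (2 / (h:ℝ)) * ∑ i ∈ K, Ex w (fun E => 1 - W i E) ≤ (2 / (h:ℝ)) * (h * η) :=
    mul_le_mul_of_nonneg_left this (by positivity)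
  have h5 : (2 / (h:ℝ)) * (h * η) = 2 * η := by field_simp
  linarith

lemma prod_cnt (A : Finset ι) (E : ι → Bool) (p : ℝ) :
    ∏ e ∈ A, (if E e then p else 1 - p) = p ^ cnt A E * (1 - p) ^ (A.card - cnt A E) := by
  rw [Finset.prod_ite, Finset.prod_const, Finset.prod_const]
  have := Finset.card_filter_add_card_filter_not (s := A) (fun e => E e = true)
  unfold cnt
  congr 2
  omega

end ExpSec2

section Comb
variable {n k : ℕ}

/-- edges through `i` whose other vertices avoid `H` and carry label `b` -/
noncomputable def GG (σ : Fin n → Bool) (H : Finset (Fin n)) (i : Fin n) (b : Bool) :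
    Finset (KSet n k) :=
  Finset.univ.filter fun e => i ∈ e.1 ∧ ∀ j ∈ e.1, j ≠ i → (j ∉ H ∧ σ j = b)

/-- edges through `i` and another vertex of `H` -/
noncomputable def QQ (H : Finset (Fin n)) (i : Fin n) : Finset (KSet n k) :=
  Finset.univ.filter fun e => i ∈ e.1 ∧ ∃ j ∈ e.1, j ≠ i ∧ j ∈ H

/-- flip the label of `i` -/
def flipAt (σ : Fin n → Bool) (i : Fin n) : Fin n → Bool := Function.update σ i (!σ i)

lemma exists_other (hk : 2 ≤ k) (e : KSet n k) (i : Fin n) : ∃ j ∈ e.1, j ≠ i :=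
  Finset.exists_mem_ne (by rw [e.2]; omega) i

lemma GG_in (hk : 2 ≤ k) {σ : Fin n → Bool} {H : Finset (Fin n)} {i : Fin n} {b : Bool}
    {e : KSet n k} (he : e ∈ GG σ H i b) : inCluster σ e.1 ↔ σ i = b := by
  simp only [GG, Finset.mem_filter, Finset.mem_univ, true_and] at he
  obtain ⟨hi, hj⟩ := he
  constructor
  · intro h
    obtain ⟨j, hj1, hj2⟩ := exists_other hk e i
    rw [h i hi j hj1]; exact (hj j hj1 hj2).2
  · intro h
    have : ∀ j ∈ e.1, σ j = b := by
      intro j hj1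
      by_cases hji : j = i
      · rw [hji, h]
      · exact (hj j hj1 hji).2
    intro x hx y hy
    rw [this x hx, this y hy]

lemma GG_flip_same (σ : Fin n → Bool) (H : Finset (Fin n)) (i j : Fin n) (hi : i ∈ H ∨ i = j)
    (b : Bool) : (GG (flipAt σ i) H j b : Finset (KSet n k)) = GG σ H j b := by
  unfold GG
  apply Finset.filter_congr
  intro e _
  refine and_congr_right fun _ => forall_congr' fun x => forall_congr' fun _ =>
    forall_congr' fun hxj => and_congr_right fun hxH => ?_
  have : x ≠ i := by
    rintro rfl
    rcases hi with h | h
    · exact hxH h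
    · exact hxj h
  simp [flipAt, Function.update_of_ne this]

lemma GG_disj (hk : 2 ≤ k) (σ : Fin n → Bool) (H : Finset (Fin n)) (i : Fin n) (b b' : Bool)
    (hb : b ≠ b') : Disjoint (GG σ H i b : Finset (KSet n k)) (GG σ H i b') := by
  rw [Finset.disjoint_left]
  intro e h1 h2
  simp only [GG, Finset.mem_filter, Finset.mem_univ, true_and] at h1 h2
  obtain ⟨j, hj1, hj2⟩ := exists_other hk e i
  exact hb ((h1.2 j hj1 hj2).2.symm.trans (h2.2 j hj1 hj2).2)

lemma flip_lik (hk : 2 ≤ k) (p q s : ℝ) (hp0 : 0 ≤ p) (hq0 : 0 ≤ q) (hps : p ≤ s) (hqs : q ≤ s)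
    (hs1 : s ≤ 1) (σ : Fin n → Bool) (H : Finset (Fin n)) (i : Fin n) (E : KSet n k → Bool)
    (hQ : ∀ e ∈ (QQ H i : Finset (KSet n k)), E e = false)
    (hcard : (GG σ H i (σ i) : Finset (KSet n k)).card = (GG σ H i (!σ i) : Finset (KSet n k)).card)
    (hcnt : cnt (GG σ H i (σ i)) E = cnt (GG σ H i (!σ i)) E) :
    (1 - s) ^ (QQ H i : Finset (KSet n k)).card * hypProb p q σ E ≤ hypProb p q (flipAt σ i) E := by
  set A : Finset (KSet n k) := GG σ H i (σ i) with hA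
  set B : Finset (KSet n k) := GG σ H i (!σ i) with hB
  set Q : Finset (KSet n k) := QQ H i with hQdef
  have hAB : Disjoint A B := GG_disj hk σ H i _ _ (by simp)
  set f : KSet n k → ℝ := fun e => if E e then edgeP p q σ e.1 else 1 - edgeP p q σ e.1 with hf
  set g : KSet n k → ℝ := fun e => if E e then edgeP p q (flipAt σ i) e.1
    else 1 - edgeP p q (flipAt σ i) e.1 with hg
  have hfi : flipAt σ i i = !σ i := by simp [flipAt]
  have fA : ∏ e ∈ A, f e = p ^ cnt A E * (1 - p) ^ (A.card - cnt A E) := by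
    rw [← prod_cnt]
    refine Finset.prod_congr rfl fun e he => ?_
    have := (GG_in hk he).2 rfl
    simp only [hf, edgeP, if_pos this]
  have fB : ∏ e ∈ B, f e = q ^ cnt B E * (1 - q) ^ (B.card - cnt B E) := by
    rw [← prod_cnt]
    refine Finset.prod_congr rfl fun e he => ?_
    have : ¬ inCluster σ e.1 := fun h => by simpa using (GG_in hk he).1 h
    simp only [hf, edgeP, if_neg this]
  have gA : ∏ e ∈ A, g e = q ^ cnt A E * (1 - q) ^ (A.card - cnt A E) := by
    rw [← prod_cnt]
    refine Finset.prod_congr rfl fun e he => ?_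
    have : ¬ inCluster (flipAt σ i) e.1 := fun h => by
      rw [hA, ← GG_flip_same σ H i i (Or.inr rfl)] at he
      have := (GG_in hk he).1 h
      rw [hfi] at this
      simp at this
    simp only [hg, edgeP, if_neg this]
  have gB : ∏ e ∈ B, g e = p ^ cnt B E * (1 - p) ^ (B.card - cnt B E) := by
    rw [← prod_cnt]
    refine Finset.prod_congr rfl fun e he => ?_
    have : inCluster (flipAt σ i) e.1 := by
      rw [hB, ← GG_flip_same σ H i i (Or.inr rfl)] at he
      exact (GG_in hk he).2 hfi
    simp only [hg, edgeP, if_pos this]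
  have hU : ∏ e ∈ A ∪ B, f e = ∏ e ∈ A ∪ B, g e := by
    rw [Finset.prod_union hAB, Finset.prod_union hAB, fA, fB, gA, gB, hcnt, hcard]
    ring
  have hP0 : ∀ τ : Fin n → Bool, ∀ e : Finset (Fin n), 0 ≤ edgeP p q τ e := fun τ e => by
    unfold edgeP; split_ifs <;> assumption
  have hPs : ∀ τ : Fin n → Bool, ∀ e : Finset (Fin n), edgeP p q τ e ≤ s := fun τ e => by
    unfold edgeP; split_ifs <;> assumption
  have hf0 : ∀ e, 0 ≤ f e := fun e => by
    simp only [hf]; split_ifs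
    · exact hP0 _ _
    · linarith [hPs σ e.1]
  have hg0 : ∀ e, 0 ≤ g e := fun e => by
    simp only [hg]; split_ifs
    · exact hP0 _ _
    · linarith [hPs (flipAt σ i) e.1]
  have hpt : ∀ e ∈ (A ∪ B)ᶜ, (if e ∈ Q then 1 - s else 1) * f e ≤ g e := by
    intro e he
    by_cases heQ : e ∈ Q
    · have hE := hQ e heQ
      simp only [heQ, if_true, hf, hg, hE]
      have h1 := hP0 σ e.1
      have h2 := hPs (flipAt σ i) e.1
      simp
      nlinarith [hPs σ e.1]
    · have hsame : inCluster σ e.1 ↔ inCluster (flipAt σ i) e.1 := by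
        by_cases hie : i ∈ e.1
        · -- there are other vertices of both labels
          simp only [Finset.mem_compl, Finset.mem_union, not_or] at he
          have hnH : ∀ j ∈ e.1, j ≠ i → j ∉ H := by
            intro j hj hji hjH
            exact heQ (by simp [hQdef, QQ]; exact ⟨hie, j, hj, hji, hjH⟩)
          have hx : ∀ b, e ∉ (GG σ H i b : Finset (KSet n k)) → ∃ j ∈ e.1, j ≠ i ∧ σ j ≠ b := by
            intro b hb
            by_contra hcon
            push Not at hcon
            exact hb (by
              simp only [GG, Finset.mem_filter, Finset.mem_univ, true_and]
              exact ⟨hie, fun j hj hji => ⟨hnH j hj hji, hcon j hj hji⟩⟩)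
          obtain ⟨x, hx1, hx2, hx3⟩ := hx _ he.1
          obtain ⟨y, hy1, hy2, hy3⟩ := hx _ he.2
          have hxy : σ x ≠ σ y := by
            intro h
            rw [h] at hx3
            revert hx3 hy3
            cases σ y <;> cases σ i <;> simp
          constructor
          · intro h; exact absurd (h x hx1 y hy1) hxy
          · intro h
            have := h x hx1 y hy1
            simp only [flipAt, Function.update_of_ne hx2, Function.update_of_ne hy2] at this
            exact absurd this hxy
        · have : ∀ j ∈ e.1, flipAt σ i j = σ j := fun j hj => by
            have : j ≠ i := by rintro rfl; exact hie hj
            simp [flipAt, Function.update_of_ne this]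
          constructor
          · intro h x hx y hy
            rw [this x hx, this y hy]; exact h x hx y hy
          · intro h x hx y hy
            rw [← this x hx, ← this y hy]; exact h x hx y hy
      have : edgeP p q σ e.1 = edgeP p q (flipAt σ i) e.1 := by
        unfold edgeP
        by_cases hc : inCluster σ e.1
        · rw [if_pos hc, if_pos (hsame.1 hc)]
        · rw [if_neg hc, if_neg (fun h => hc (hsame.2 h))]
      simp [heQ, hf, hg, this]
  have hV : (1 - s) ^ Q.card * ∏ e ∈ (A ∪ B)ᶜ, f e ≤ ∏ e ∈ (A ∪ B)ᶜ, g e := by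
    have h1 : ∏ e ∈ (A ∪ B)ᶜ, ((if e ∈ Q then 1 - s else 1) * f e) ≤ ∏ e ∈ (A ∪ B)ᶜ, g e := by
      refine Finset.prod_le_prod (fun e _ => mul_nonneg ?_ (hf0 e)) hpt
      split_ifs <;> linarith
    refine le_trans ?_ h1
    rw [Finset.prod_mul_distrib, Finset.prod_ite_mem, Finset.prod_const]
    apply mul_le_mul_of_nonneg_right _ (Finset.prod_nonneg fun e _ => hf0 e)
    exact pow_le_pow_of_le_one (by linarith) (by linarith)
      (Finset.card_le_card Finset.inter_subset_right)
  have eF : hypProb p q σ E = (∏ e ∈ A ∪ B, f e) * ∏ e ∈ (A ∪ B)ᶜ, f e := by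
    rw [Finset.prod_mul_prod_compl]; rfl
  have eG : hypProb p q (flipAt σ i) E = (∏ e ∈ A ∪ B, g e) * ∏ e ∈ (A ∪ B)ᶜ, g e := by
    rw [Finset.prod_mul_prod_compl]; rfl
  rw [eF, eG, hU]
  have := mul_le_mul_of_nonneg_left hV (Finset.prod_nonneg (s := A ∪ B) fun e _ => hg0 e)
  linarith

lemma GG_card (hk : 2 ≤ k) (σ : Fin n → Bool) (H : Finset (Fin n)) (i : Fin n) (hi : i ∈ H)
    (b : Bool) : (GG σ H i b : Finset (KSet n k)).card =
      (Finset.univ.filter fun j => j ∉ H ∧ σ j = b).card.choose (k - 1) := by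
  rw [← Finset.card_powersetCard]
  symm
  set F := Finset.univ.filter fun j => j ∉ H ∧ σ j = b with hF
  have hiF : i ∉ F := by simp [hF, hi]
  refine Finset.card_bij' (fun T hT => (⟨insert i T, ?_⟩ : KSet n k)) (fun e _ => e.1.erase i)
    ?_ ?_ ?_ ?_
  · rw [Finset.mem_powersetCard] at hT
    rw [Finset.card_insert_of_notMem (fun h => hiF (hT.1 h)), hT.2]; omega
  · intro T hT
    rw [Finset.mem_powersetCard] at hT
    simp only [GG, Finset.mem_filter, Finset.mem_univ, true_and]
    refine ⟨Finset.mem_insert_self _ _, fun j hj hji => ?_⟩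
    have := hT.1 (Finset.mem_of_mem_insert_of_ne hj hji)
    simpa [hF] using this
  · intro e he
    simp only [GG, Finset.mem_filter, Finset.mem_univ, true_and] at he
    rw [Finset.mem_powersetCard]
    refine ⟨fun j hj => ?_, by rw [Finset.card_erase_of_mem he.1, e.2]⟩
    rw [Finset.mem_erase] at hj
    simpa [hF] using he.2 j hj.2 hj.1
  · intro T hT
    rw [Finset.mem_powersetCard] at hT
    exact Finset.erase_insert (fun h => hiF (hT.1 h))
  · intro e he
    simp only [GG, Finset.mem_filter, Finset.mem_univ, true_and] at he
    exact Subtype.ext (Finset.insert_erase he.1)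

lemma pair_card (i j : Fin n) (hij : j ≠ i) :
    ((Finset.univ.filter fun e : KSet n k => i ∈ e.1 ∧ j ∈ e.1)).card ≤ (n - 2).choose (k - 2) := by
  have h1 : ((Finset.univ.erase i).erase j : Finset (Fin n)).card = n - 2 := by
    rw [Finset.card_erase_of_mem (by simp [hij]), Finset.card_erase_of_mem (Finset.mem_univ _)]
    simp; omega
  rw [← h1, ← Finset.card_powersetCard]
  refine Finset.card_le_card_of_injOn (fun e => (e.1.erase i).erase j) ?_ ?_
  · intro e he
    simp only [Finset.coe_filter, Finset.mem_univ, true_and, Set.mem_ofPred_eq] at he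
    simp only [Finset.mem_coe, Finset.mem_powersetCard]
    refine ⟨Finset.erase_subset_erase _ (Finset.erase_subset_erase _ (Finset.subset_univ _)), ?_⟩
    rw [Finset.card_erase_of_mem (by simp [hij, he.2]), Finset.card_erase_of_mem he.1, e.2]
    omega
  · intro e he e' he' h
    simp only [Finset.coe_filter, Finset.mem_univ, true_and, Set.mem_ofPred_eq] at he he'
    have h2 : insert i (insert j ((e.1.erase i).erase j)) = insert i (insert j ((e'.1.erase i).erase j)) := by
      simp only [] at h
      rw [h]
    rw [Finset.insert_erase (by simp [hij, he.2]), Finset.insert_erase he.1,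
      Finset.insert_erase (by simp [hij, he'.2]), Finset.insert_erase he'.1] at h2
    exact Subtype.ext h2

lemma QQ_card (H : Finset (Fin n)) (i : Fin n) :
    (QQ H i : Finset (KSet n k)).card ≤ H.card * (n - 2).choose (k - 2) := by
  have h1 : (QQ H i : Finset (KSet n k)) ⊆ (H.erase i).biUnion
      (fun j => Finset.univ.filter fun e : KSet n k => i ∈ e.1 ∧ j ∈ e.1) := by
    intro e he
    simp only [QQ, Finset.mem_filter, Finset.mem_univ, true_and] at he
    obtain ⟨hi, j, hj, hji, hjH⟩ := he
    simp only [Finset.mem_biUnion, Finset.mem_filter, Finset.mem_univ, true_and, Finset.mem_erase]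
    exact ⟨j, ⟨hji, hjH⟩, hi, hj⟩
  refine (Finset.card_le_card h1).trans ?_
  refine (Finset.card_biUnion_le_card_mul _ _ ((n - 2).choose (k - 2)) ?_).trans
    (Nat.mul_le_mul_right _ (Finset.card_le_card (Finset.erase_subset _ _)))
  intro j hj
  exact pair_card i j (Finset.mem_erase.1 hj).1

end Comb
section Main
variable {k : ℕ}

/-- the posterior mass of `σ` given `E` is at most `2 / M` -/
def goodEv (n k : ℕ) (p q : ℝ) (M : ℕ) (σ : Fin n → Bool) (E : KSet n k → Bool) : Prop :=
  (M : ℝ) * (sigProb n σ * hypProb p q σ E) ≤ 2 * ∑ τ, sigProb n τ * hypProb p q τ E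

lemma hypProb_eq {n : ℕ} (p q : ℝ) (σ : Fin n → Bool) (E : KSet n k → Bool) :
    hypProb p q σ E = bw (fun e : KSet n k => edgeP p q σ e.1) E := rfl

lemma edgeP_nonneg {n : ℕ} {p q : ℝ} (hp0 : 0 ≤ p) (hq0 : 0 ≤ q) (σ : Fin n → Bool)
    (e : Finset (Fin n)) : 0 ≤ edgeP p q σ e := by
  unfold edgeP; split_ifs <;> assumption

lemma edgeP_le {n : ℕ} {p q s : ℝ} (hp0 : p ≤ s) (hq0 : q ≤ s) (σ : Fin n → Bool)
    (e : Finset (Fin n)) : edgeP p q σ e ≤ s := by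
  unfold edgeP; split_ifs <;> assumption

lemma hypProb_nonneg {n : ℕ} {p q : ℝ} (hp0 : 0 ≤ p) (hq0 : 0 ≤ q) (hp1 : p ≤ 1) (hq1 : q ≤ 1)
    (σ : Fin n → Bool) (E : KSet n k → Bool) : 0 ≤ hypProb p q σ E := by
  rw [hypProb_eq]
  exact bw_nonneg (fun e => edgeP_nonneg hp0 hq0 σ e.1) (fun e => edgeP_le hp1 hq1 σ e.1) E

lemma sigProb_nonneg (n : ℕ) (σ : Fin n → Bool) : 0 ≤ sigProb n σ := by
  unfold sigProb; split_ifs <;> positivity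

lemma balanced_card {m : ℕ} {σ : Fin (2 * m) → Bool} (hσ : balanced σ) (b : Bool) :
    (Finset.univ.filter fun i => σ i = b).card = m := by
  have h1 : (Finset.univ.filter fun i => σ i = true).card = m := by
    have : 2 * (Finset.univ.filter fun i => σ i = true).card = 2 * m := hσ
    omega
  cases b
  · have h2 := Finset.card_filter_add_card_filter_not (s := (Finset.univ : Finset (Fin (2 * m))))
      (fun i => σ i = true)
    simp only [Bool.not_eq_true, Finset.card_univ, Fintype.card_fin] at h2
    omega
  · exact h1

lemma balanced_flip {m : ℕ} {σ : Fin (2 * m) → Bool} (hσ : balanced σ) (i j : Fin (2 * m))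
    (hi : σ i = true) (hj : σ j = false) : balanced (flipAt (flipAt σ i) j) := by
  have hij : j ≠ i := by rintro rfl; simp [hi] at hj
  have : (Finset.univ.filter fun x => flipAt (flipAt σ i) j x = true)
      = insert j ((Finset.univ.filter fun x => σ x = true).erase i) := by
    ext x
    simp only [Finset.mem_filter, Finset.mem_univ, true_and, Finset.mem_insert, Finset.mem_erase]
    by_cases hxj : x = j
    · subst hxj; simp [flipAt, hij, hj]
    · by_cases hxi : x = i
      · subst hxi; simp [flipAt, hxj, hi]
      · simp [flipAt, hxj, hxi]
  have h1 := balanced_card hσ true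
  have hm : 0 < m := by
    rw [← h1]; exact Finset.card_pos.2 ⟨i, by simp [hi]⟩
  unfold balanced
  rw [this, Finset.card_insert_of_notMem (by simp [hj]), Finset.card_erase_of_mem (by simp [hi]), h1]
  omega

lemma exists_u {m M h : ℕ} (hMh : M * h ≤ m) {σ : Fin (2 * m) → Bool} (hσ : balanced σ) :
    ∃ u : Bool × Fin M × Fin h → Fin (2 * m), Function.Injective u ∧ ∀ a, σ (u a) = a.1 := by
  have h1 : ∀ b : Bool, Nonempty ((Fin M × Fin h) ↪ {i : Fin (2 * m) // σ i = b}) := by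
    intro b
    apply Function.Embedding.nonempty_of_card_le
    rw [Fintype.card_prod, Fintype.card_fin, Fintype.card_fin, Fintype.card_subtype,
      balanced_card hσ b]
    exact hMh
  have v := fun b => Classical.choice (h1 b)
  refine ⟨fun a => (v a.1 a.2).1, ?_, fun a => (v a.1 a.2).2⟩
  rintro ⟨b, x⟩ ⟨b', x'⟩ hh
  simp only [] at hh
  have hb : b = b' := by
    rw [← (v b x).2, ← (v b' x').2, hh]
  subst hb
  have := (v b).injective (Subtype.ext hh)
  rw [this]

lemma not_good_le (hk : 2 ≤ k) (m M h : ℕ) (hM : 0 < M) (hh : 0 < h) (hMh : M * h ≤ m)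
    (p q s : ℝ) (hp0 : 0 ≤ p) (hq0 : 0 ≤ q) (hps : p ≤ s) (hqs : q ≤ s) (hs1 : s ≤ 1)
    (r : ℝ) (hr0 : 0 ≤ r)
    (hr : r = ∑ t ∈ Finset.range ((m - M * h).choose (k - 1) + 1),
      (((m - M * h).choose (k - 1)).choose t *
        (p ^ t * (1 - p) ^ ((m - M * h).choose (k - 1) - t))) *
      (((m - M * h).choose (k - 1)).choose t *
        (q ^ t * (1 - q) ^ ((m - M * h).choose (k - 1) - t))))
    (η : ℝ) (hη : η = (2 * (M * h) * (2 * m - 2).choose (k - 2) : ℕ) * s) (hη4 : η ≤ 1 / 4)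
    (σ : Fin (2 * m) → Bool) (hσ : balanced σ) :
    ∑ E : KSet (2 * m) k → Bool, hypProb p q σ E * (if goodEv (2 * m) k p q M σ E then 0 else 1)
      ≤ 2 * M * (Real.exp (-(r * h / 2)) + 2 * η) := by
  obtain ⟨u, hu, hσu⟩ := exists_u hMh hσ
  set H : Finset (Fin (2 * m)) := Finset.univ.image u with hH
  have huH : ∀ a, u a ∈ H := fun a => Finset.mem_image_of_mem _ (Finset.mem_univ _)
  have hHcard : H.card = 2 * (M * h) := by
    rw [hH, Finset.card_image_of_injective _ hu]; simp
  have hs0 : 0 ≤ s := hp0.trans hps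
  -- class sizes outside H
  have hF : ∀ b, (Finset.univ.filter fun j => j ∉ H ∧ σ j = b).card = m - M * h := by
    intro b
    have h1 : (Finset.univ.filter fun j => j ∉ H ∧ σ j = b)
        = (Finset.univ.filter fun j => σ j = b) \
          (Finset.univ.image fun x : Fin M × Fin h => u (b, x)) := by
      ext j
      simp only [Finset.mem_filter, Finset.mem_univ, true_and, Finset.mem_sdiff, Finset.mem_image,
        hH]
      constructor
      · rintro ⟨h1, h2⟩
        exact ⟨h2, fun ⟨x, hx⟩ => h1 ⟨_, hx⟩⟩
      · rintro ⟨h1, h2⟩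
        refine ⟨?_, h1⟩
        rintro ⟨⟨b', x⟩, hx⟩
        have : b' = b := by rw [← h1, ← hx, hσu]
        subst this
        exact h2 ⟨x, hx⟩
    rw [h1, Finset.card_sdiff_of_subset, balanced_card hσ, Finset.card_image_of_injective]
    · simp
    · intro x y hxy
      have := hu hxy
      simpa using this
    · intro j hj
      simp only [Finset.mem_image, Finset.mem_univ, true_and] at hj
      obtain ⟨x, rfl⟩ := hj
      simp [hσu]
  set N := (m - M * h).choose (k - 1) with hN
  have hGc : ∀ a b, (GG σ H (u a) b : Finset (KSet (2 * m) k)).card = N := by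
    intro a b
    rw [GG_card hk σ H (u a) (huH a) b, hF b]
  set w : KSet (2 * m) k → ℝ := fun e => edgeP p q σ e.1 with hw
  have hw0 : ∀ e, 0 ≤ w e := fun e => edgeP_nonneg hp0 hq0 σ e.1
  have hws : ∀ e, w e ≤ s := fun e => edgeP_le hps hqs σ e.1
  have hw1 : ∀ e, w e ≤ 1 := fun e => (hws e).trans hs1
  set A : Bool × Fin M × Fin h → Finset (KSet (2 * m) k) := fun a => GG σ H (u a) (σ (u a)) with hA
  set B : Bool × Fin M × Fin h → Finset (KSet (2 * m) k) := fun a => GG σ H (u a) (!σ (u a)) with hB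
  set D : Bool × Fin M × Fin h → (KSet (2 * m) k → Bool) → ℝ :=
    fun a E => if cnt (A a) E = cnt (B a) E then 1 else 0 with hD
  set W : Bool × Fin M × Fin h → (KSet (2 * m) k → Bool) → ℝ :=
    fun a E => if ∀ e ∈ (QQ H (u a) : Finset (KSet (2 * m) k)), E e = false then 1 else 0 with hWdef
  have hAB : ∀ a, Disjoint (A a) (B a) := fun a => GG_disj hk σ H (u a) _ _ (by simp)
  have hrD : ∀ a, Ex w (D a) = r := by
    intro a
    rw [hr]
    refine Ex_cnt_eq w (A a) (B a) (hAB a) N (hGc a _) (hGc a _) p q ?_ ?_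
    · intro e he
      have := (GG_in hk he).2 rfl
      simp only [hw, edgeP, if_pos this]
    · intro e he
      have : ¬ inCluster σ e.1 := fun h => by simpa using (GG_in hk he).1 h
      simp only [hw, edgeP, if_neg this]
  have hr1 : r ≤ 1 := by
    -- some index exists
    have a : Bool × Fin M × Fin h := (true, ⟨0, hM⟩, ⟨0, hh⟩)
    rw [← hrD a, ← Ex_const w 1]
    refine Ex_mono hw0 hw1 fun E => ?_
    simp only [hD]; split_ifs <;> norm_num
  set Q : Set (KSet (2 * m) k) := {e | ∃ x ∈ e.1, x ∈ H ∧ ∃ y ∈ e.1, y ∈ H ∧ y ≠ x} with hQ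
  set G : Bool × Fin M × Fin h → Set (KSet (2 * m) k) := fun a => (A a : Set _) ∪ (B a : Set _)
    with hG
  have hGmem : ∀ a e, e ∈ G a → u a ∈ e.1 ∧ ∀ j ∈ e.1, j ∈ H → j = u a := by
    intro a e he
    rcases he with he | he <;>
    · simp only [hA, hB, GG, Finset.coe_filter, Finset.mem_univ, true_and, Set.mem_ofPred_eq] at he
      exact ⟨he.1, fun j hj hjH => by
        by_contra hne
        exact (he.2 j hj hne).1 hjH⟩
  have hGG : ∀ a b, a ≠ b → Disjoint (G a) (G b) := by
    intro a b hab
    rw [Set.disjoint_left]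
    intro e h1 h2
    have h1 := hGmem a e h1
    have h2 := hGmem b e h2
    exact hab (hu (h2.2 _ h1.1 (huH a)))
  have hGQ : ∀ a, Disjoint (G a) Q := by
    intro a
    rw [Set.disjoint_left]
    rintro e h1 ⟨x, hx, hxH, y, hy, hyH, hyx⟩
    have h1 := hGmem a e h1
    exact hyx ((h1.2 y hy hyH).trans (h1.2 x hx hxH).symm)
  have hDdep : ∀ a, DependsOn (D a) (G a) := by
    intro a E E' hE
    have h1 : cnt (A a) E = cnt (A a) E' := cnt_dependsOn (A a) fun e he => hE e (Or.inl he)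
    have h2 : cnt (B a) E = cnt (B a) E' := cnt_dependsOn (B a) fun e he => hE e (Or.inr he)
    simp only [hD, h1, h2]
  have hQQ : ∀ a, ∀ e ∈ (QQ H (u a) : Finset (KSet (2 * m) k)), e ∈ Q := by
    intro a e he
    simp only [QQ, Finset.mem_filter, Finset.mem_univ, true_and] at he
    obtain ⟨h1, j, hj, hja, hjH⟩ := he
    exact ⟨u a, h1, huH a, j, hj, hjH, hja⟩
  have hWdep : ∀ a, DependsOn (W a) Q := by
    intro a E E' hE
    have : (∀ e ∈ (QQ H (u a) : Finset (KSet (2 * m) k)), E e = false) ↔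
        (∀ e ∈ (QQ H (u a) : Finset (KSet (2 * m) k)), E' e = false) :=
      forall_congr' fun e => forall_congr' fun he => by rw [hE e (hQQ a e he)]
    simp only [hWdef, this]
  have hW0 : ∀ a E, 0 ≤ W a E := fun a E => by simp only [hWdef]; split_ifs <;> norm_num
  have hW1 : ∀ a E, W a E ≤ 1 := fun a E => by simp only [hWdef]; split_ifs <;> norm_num
  set C := 2 * (M * h) * (2 * m - 2).choose (k - 2) with hC
  have hQcard : ∀ a, (QQ H (u a) : Finset (KSet (2 * m) k)).card ≤ C := by
    intro a
    have := QQ_card (k := k) H (u a)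
    rwa [hHcard] at this
  have hηW : ∀ a, Ex w (fun E => 1 - W a E) ≤ η := by
    intro a
    have h1 : ∀ E, 1 - W a E ≤
        ∑ e ∈ (QQ H (u a) : Finset (KSet (2 * m) k)), if E e then (1:ℝ) else 0 := by
      intro E
      by_cases hc : ∀ e ∈ (QQ H (u a) : Finset (KSet (2 * m) k)), E e = false
      · have : W a E = 1 := by simp only [hWdef]; rw [if_pos hc]
        rw [this, sub_self]
        exact Finset.sum_nonneg fun e _ => by split_ifs <;> norm_num
      · have : W a E = 0 := by simp only [hWdef]; rw [if_neg hc]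
        rw [this]
        push Not at hc
        obtain ⟨e, he, hEe⟩ := hc
        have h2 := Finset.single_le_sum (f := fun e => if E e then (1:ℝ) else 0)
          (fun e _ => by split_ifs <;> norm_num) he
        have hEe' : E e = true := by simpa using hEe
        rw [if_pos hEe'] at h2
        linarith
    refine (Ex_mono hw0 hw1 h1).trans ?_
    rw [Ex_sum]
    simp_rw [Ex_coord]
    refine (Finset.sum_le_card_nsmul _ _ s fun e _ => hws e).trans ?_
    rw [nsmul_eq_mul, hη]
    apply mul_le_mul_of_nonneg_right _ hs0
    exact_mod_cast hQcard a
  set K : Bool × Fin M → Finset (Bool × Fin M × Fin h) :=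
    fun c => {c.1} ×ˢ ({c.2} ×ˢ Finset.univ) with hK
  have hgroup : ∀ c, Ex w (fun E => ∏ a ∈ K c, (1 - W a E * D a E)) ≤
      Real.exp (-(r * h / 2)) + 2 * η := by
    intro c
    refine Ex_group w hw0 hw1 G Q hGG hGQ D W hDdep hWdep hW0 hW1 r hr0 hr1 (K c)
      (fun a _ => hrD a) h hh ?_ η (fun a _ => hηW a)
    simp [hK]
  -- pointwise bound
  have hf0 : ∀ E c, 0 ≤ ∏ a ∈ K c, (1 - W a E * D a E) := by
    intro E c
    refine Finset.prod_nonneg fun a _ => ?_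
    simp only [hD]
    split_ifs
    · linarith [hW1 a E]
    · norm_num
  have hpt : ∀ E, (if goodEv (2 * m) k p q M σ E then (0:ℝ) else 1) ≤
      ∑ c : Bool × Fin M, ∏ a ∈ K c, (1 - W a E * D a E) := by
    intro E
    split_ifs with hgood
    · exact Finset.sum_nonneg fun c _ => hf0 E c
    · by_cases hall : ∀ c, ∏ a ∈ K c, (1 - W a E * D a E) = 0
      · exfalso
        apply hgood
        have hex : ∀ c : Bool × Fin M, ∃ a : Bool × Fin M × Fin h, a.1 = c.1 ∧ a.2.1 = c.2 ∧
            (∀ e ∈ (QQ H (u a) : Finset (KSet (2 * m) k)), E e = false) ∧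
            cnt (A a) E = cnt (B a) E := by
          intro c
          obtain ⟨a, ha, ha0⟩ := Finset.prod_eq_zero_iff.1 (hall c)
          simp only [hK, Finset.mem_product, Finset.mem_singleton, Finset.mem_univ, and_true] at ha
          refine ⟨a, ha.1, ha.2, ?_, ?_⟩
          · by_contra hcon
            have : W a E = 0 := by simp only [hWdef]; rw [if_neg hcon]
            rw [this] at ha0; norm_num at ha0
          · by_contra hcon
            have : D a E = 0 := by simp only [hD]; rw [if_neg hcon]
            rw [this] at ha0; norm_num at ha0
        choose x hx1 hx2 hx3 hx4 using hex
        set j := u (x (false, ⟨0, hM⟩)) with hj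
        set i : Fin M → Fin (2 * m) := fun g => u (x (true, g)) with hi
        have hσj : σ j = false := by rw [hj, hσu, hx1]
        have hσi : ∀ g, σ (i g) = true := fun g => by simp only [hi]; rw [hσu, hx1]
        have hinj : Function.Injective i := by
          intro g g' hgg
          have := hu hgg
          have h1 := hx2 (true, g)
          rw [this, hx2 (true, g')] at h1
          exact h1.symm
        have hij : ∀ g, i g ≠ j := fun g hgj => by
          have := hσi g; rw [hgj, hσj] at this; simp at this
        set τ : Fin M → (Fin (2 * m) → Bool) := fun g => flipAt (flipAt σ (i g)) j with hτ
        have hτi : ∀ g g', τ g (i g') = true → g' ≠ g := by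
          intro g g' h1 h2
          subst h2
          simp [hτ, flipAt, hij, hσi] at h1
        have hτi2 : ∀ g g', g' ≠ g → τ g (i g') = true := by
          intro g g' h2
          have : i g' ≠ i g := fun h => h2 (hinj h)
          simp [hτ, flipAt, hij, hσi, this]
        have hτinj : Function.Injective τ := by
          intro g g' hgg
          by_contra hne
          have h1 := hτi2 g g' (Ne.symm hne)
          rw [hgg] at h1
          exact hτi g' g' h1 rfl
        have hypn : ∀ τ : Fin (2 * m) → Bool, 0 ≤ hypProb p q τ E := fun τ =>
          hypProb_nonneg hp0 hq0 (hps.trans hs1) (hqs.trans hs1) τ E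
        have hlik : ∀ g, hypProb p q σ E ≤ 2 * hypProb p q (τ g) E := by
          intro g
          have l1 := flip_lik hk p q s hp0 hq0 hps hqs hs1 σ H (i g) E (hx3 (true, g))
            (by rw [hGc, hGc]) (hx4 (true, g))
          have hne : flipAt σ (i g) j = σ j := by
            simp [flipAt, Function.update_of_ne (hij g).symm]
          have hsame : ∀ b, (GG (flipAt σ (i g)) H j b : Finset (KSet (2 * m) k)) = GG σ H j b :=
            fun b => GG_flip_same σ H (i g) j (Or.inl (huH _)) b
          have l2 := flip_lik hk p q s hp0 hq0 hps hqs hs1 (flipAt σ (i g)) H j E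
            (hx3 (false, ⟨0, hM⟩))
            (by rw [hsame, hsame, hGc, hGc])
            (by rw [hsame, hsame, hne]; exact hx4 (false, ⟨0, hM⟩))
          have hpow : ∀ a, 3 / 4 ≤ (1 - s) ^ (QQ H (u a) : Finset (KSet (2 * m) k)).card := by
            intro a
            have h1 := one_add_mul_le_pow (show (-2:ℝ) ≤ -s by linarith)
              (QQ H (u a) : Finset (KSet (2 * m) k)).card
            have h2 : ((QQ H (u a) : Finset (KSet (2 * m) k)).card : ℝ) * s ≤ η := by
              rw [hη]
              apply mul_le_mul_of_nonneg_right _ hs0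
              exact_mod_cast hQcard a
            rw [← sub_eq_add_neg] at h1
            linarith
          have p1 := mul_le_mul_of_nonneg_right (hpow (x (true, g))) (hypn σ)
          have p2 := mul_le_mul_of_nonneg_right (hpow (x (false, ⟨0, hM⟩)))
            (hypn (flipAt σ (i g)))
          have q1 : 3 / 4 * hypProb p q σ E ≤ hypProb p q (flipAt σ (i g)) E := p1.trans l1
          have q2 : 3 / 4 * hypProb p q (flipAt σ (i g)) E ≤ hypProb p q (τ g) E := p2.trans l2
          linarith [hypn σ]
        have hsig : ∀ g, sigProb (2 * m) (τ g) = sigProb (2 * m) σ := by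
          intro g
          unfold sigProb
          rw [if_pos hσ, if_pos (balanced_flip hσ (i g) j (hσi g) hσj)]
        unfold goodEv
        have hsum : ∑ g : Fin M, sigProb (2 * m) (τ g) * hypProb p q (τ g) E ≤
            ∑ τ, sigProb (2 * m) τ * hypProb p q τ E := by
          rw [← Finset.sum_image (s := Finset.univ) (g := τ)
            (f := fun τ => sigProb (2 * m) τ * hypProb p q τ E) (fun a _ b _ hab => hτinj hab)]
          exact Finset.sum_le_sum_of_subset_of_nonneg (Finset.subset_univ _)
            (fun τ _ _ => mul_nonneg (sigProb_nonneg _ _) (hypn τ))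
        have hsum2 : (M:ℝ) * (sigProb (2 * m) σ * hypProb p q σ E) ≤
            ∑ g : Fin M, 2 * (sigProb (2 * m) (τ g) * hypProb p q (τ g) E) := by
          have : (M:ℝ) * (sigProb (2 * m) σ * hypProb p q σ E) =
            ∑ g : Fin M, sigProb (2 * m) σ * hypProb p q σ E := by simp
          rw [this]
          refine Finset.sum_le_sum fun g _ => ?_
          rw [hsig]
          have := mul_le_mul_of_nonneg_left (hlik g) (sigProb_nonneg (2 * m) σ)
          linarith
        rw [← Finset.mul_sum] at hsum2
        linarith
      · push Not at hall
        obtain ⟨c, hc⟩ := hall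
        have h1 : (1:ℝ) ≤ ∏ a ∈ K c, (1 - W a E * D a E) := by
          have : ∏ a ∈ K c, (1 - W a E * D a E) = 1 := by
            apply Finset.prod_eq_one
            intro a ha
            have hne : 1 - W a E * D a E ≠ 0 := fun h0 => hc (Finset.prod_eq_zero ha h0)
            revert hne
            simp only [hWdef, hD]
            split_ifs <;> norm_num
          rw [this]
        exact h1.trans (Finset.single_le_sum (f := fun c => ∏ a ∈ K c, (1 - W a E * D a E))
          (fun c _ => hf0 E c) (Finset.mem_univ c))
  calc ∑ E : KSet (2 * m) k → Bool, hypProb p q σ E *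
        (if goodEv (2 * m) k p q M σ E then 0 else 1)
      = Ex w (fun E => if goodEv (2 * m) k p q M σ E then 0 else 1) := rfl
    _ ≤ Ex w (fun E => ∑ c : Bool × Fin M, ∏ a ∈ K c, (1 - W a E * D a E)) :=
        Ex_mono hw0 hw1 hpt
    _ = ∑ c : Bool × Fin M, Ex w (fun E => ∏ a ∈ K c, (1 - W a E * D a E)) := Ex_sum _ _ _
    _ ≤ ∑ c : Bool × Fin M, (Real.exp (-(r * h / 2)) + 2 * η) :=
        Finset.sum_le_sum fun c _ => hgroup c
    _ = _ := by
        rw [Finset.sum_const, Finset.card_univ, Fintype.card_prod, Fintype.card_bool,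
          Fintype.card_fin, nsmul_eq_mul]
        push_cast; ring

end Main
section Final

lemma sigProb_sum (m : ℕ) : ∑ σ, sigProb (2 * m) σ = 1 := by
  have hex : ∃ σ : Fin (2 * m) → Bool, balanced σ := by
    obtain ⟨S, -, hS⟩ := Finset.exists_subset_card_eq
      (show m ≤ (Finset.univ : Finset (Fin (2 * m))).card by simp; omega)
    refine ⟨fun i => decide (i ∈ S), ?_⟩
    simp [balanced, hS]
  obtain ⟨σ₀, hσ₀⟩ := hex
  have hpos : 0 < (Finset.univ.filter (fun τ : Fin (2 * m) → Bool => balanced τ)).card :=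
    Finset.card_pos.2 ⟨σ₀, Finset.mem_filter.2 ⟨Finset.mem_univ _, hσ₀⟩⟩
  unfold sigProb
  rw [← Finset.sum_filter, Finset.sum_const, nsmul_eq_mul]
  have : ((Finset.univ.filter (fun τ : Fin (2 * m) → Bool => balanced τ)).card : ℝ) ≠ 0 := by
    exact_mod_cast hpos.ne'
  field_simp

lemma hypProb_sum {n k : ℕ} (p q : ℝ) (σ : Fin n → Bool) :
    ∑ E : KSet n k → Bool, hypProb p q σ E = 1 :=
  bw_sum (fun e : KSet n k => edgeP p q σ e.1)

lemma total_one (m k : ℕ) (p q : ℝ) :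
    ∑ σ : Fin (2 * m) → Bool, ∑ E : KSet (2 * m) k → Bool,
      sigProb (2 * m) σ * hypProb p q σ E = 1 := by
  simp_rw [← Finset.mul_sum, hypProb_sum, mul_one]
  exact sigProb_sum m

lemma est_success (m k M : ℕ) (hM : 0 < M) (p q : ℝ) (hp0 : 0 ≤ p) (hq0 : 0 ≤ q) (hp1 : p ≤ 1)
    (hq1 : q ≤ 1) (δ : ℝ)
    (hδ : ∀ σ : Fin (2 * m) → Bool, balanced σ → ∑ E : KSet (2 * m) k → Bool,
      hypProb p q σ E * (if goodEv (2 * m) k p q M σ E then 0 else 1) ≤ δ)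
    (f : (KSet (2 * m) k → Bool) → (Fin (2 * m) → Bool)) :
    ∑ σ : Fin (2 * m) → Bool, ∑ E : KSet (2 * m) k → Bool,
      sigProb (2 * m) σ * hypProb p q σ E * (if f E = σ then 1 else 0) ≤ 2 / M + δ := by
  have hM' : (0:ℝ) < M := by exact_mod_cast hM
  have hnn : ∀ (σ : Fin (2 * m) → Bool) (E : KSet (2 * m) k → Bool),
      0 ≤ sigProb (2 * m) σ * hypProb p q σ E := fun σ E =>
    mul_nonneg (sigProb_nonneg _ _) (hypProb_nonneg hp0 hq0 hp1 hq1 σ E)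
  have hsplit : ∀ (σ : Fin (2 * m) → Bool) (E : KSet (2 * m) k → Bool),
      sigProb (2 * m) σ * hypProb p q σ E * (if f E = σ then 1 else 0) ≤
      (if f E = σ then (2 / M) * ∑ τ, sigProb (2 * m) τ * hypProb p q τ E else 0) +
      sigProb (2 * m) σ * (hypProb p q σ E * (if goodEv (2 * m) k p q M σ E then 0 else 1)) := by
    intro σ E
    have hS : 0 ≤ ∑ τ, sigProb (2 * m) τ * hypProb p q τ E :=
      Finset.sum_nonneg fun τ _ => hnn τ E
    have hn := hnn σ E
    by_cases hf : f E = σ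
    · by_cases hg : goodEv (2 * m) k p q M σ E
      · have hg' := hg
        unfold goodEv at hg'
        simp only [hf, hg, if_true, mul_one, mul_zero, add_zero]
        rw [div_mul_eq_mul_div, le_div_iff₀ hM']
        linarith
      · simp only [hf, hg, if_true, if_false, mul_one]
        have : 0 ≤ (2 / (M:ℝ)) * ∑ τ, sigProb (2 * m) τ * hypProb p q τ E :=
          mul_nonneg (by positivity) hS
        linarith
    · simp only [hf, if_false, mul_zero, zero_add]
      rw [← mul_assoc]
      exact mul_nonneg hn (by split_ifs <;> norm_num)
  calc _ ≤ ∑ σ : Fin (2 * m) → Bool, ∑ E : KSet (2 * m) k → Bool,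
      ((if f E = σ then (2 / M) * ∑ τ, sigProb (2 * m) τ * hypProb p q τ E else 0) +
      sigProb (2 * m) σ * (hypProb p q σ E * (if goodEv (2 * m) k p q M σ E then 0 else 1))) :=
        Finset.sum_le_sum fun σ _ => Finset.sum_le_sum fun E _ => hsplit σ E
    _ = (∑ E : KSet (2 * m) k → Bool, ∑ σ : Fin (2 * m) → Bool,
        (if f E = σ then (2 / M) * ∑ τ, sigProb (2 * m) τ * hypProb p q τ E else 0)) +
        ∑ σ : Fin (2 * m) → Bool, sigProb (2 * m) σ * ∑ E : KSet (2 * m) k → Bool,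
          (hypProb p q σ E * (if goodEv (2 * m) k p q M σ E then 0 else 1)) := by
        simp_rw [Finset.sum_add_distrib, Finset.mul_sum]
        rw [Finset.sum_comm]
    _ ≤ 2 / M + δ := by
        apply add_le_add
        · simp_rw [Finset.sum_ite_eq, Finset.mem_univ, if_true]
          rw [← Finset.mul_sum, Finset.sum_comm, total_one, mul_one]
        · calc _ ≤ ∑ σ : Fin (2 * m) → Bool, sigProb (2 * m) σ * δ := by
                refine Finset.sum_le_sum fun σ _ => ?_
                by_cases hb : balanced σ
                · exact mul_le_mul_of_nonneg_left (hδ σ hb) (sigProb_nonneg _ _)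
                · have : sigProb (2 * m) σ = 0 := by unfold sigProb; rw [if_neg hb]
                  rw [this]; simp
            _ = δ := by rw [← Finset.sum_mul, sigProb_sum, one_mul]

lemma negB_negB {n : ℕ} (σ : Fin n → Bool) : negB (negB σ) = σ := by
  funext i; simp [negB]

lemma fail_bounds (m k M : ℕ) (hM : 0 < M) (p q : ℝ) (hp0 : 0 ≤ p) (hq0 : 0 ≤ q) (hp1 : p ≤ 1)
    (hq1 : q ≤ 1) (δ : ℝ)
    (hδ : ∀ σ : Fin (2 * m) → Bool, balanced σ → ∑ E : KSet (2 * m) k → Bool,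
      hypProb p q σ E * (if goodEv (2 * m) k p q M σ E then 0 else 1) ≤ δ)
    (f : (KSet (2 * m) k → Bool) → (Fin (2 * m) → Bool)) :
    1 - 2 * (2 / M + δ) ≤ prEvent (2 * m) k p q (fun σ E => f E ≠ σ ∧ f E ≠ negB σ) ∧
    prEvent (2 * m) k p q (fun σ E => f E ≠ σ ∧ f E ≠ negB σ) ≤ 1 := by
  have hnn : ∀ (σ : Fin (2 * m) → Bool) (E : KSet (2 * m) k → Bool),
      0 ≤ sigProb (2 * m) σ * hypProb p q σ E := fun σ E =>
    mul_nonneg (sigProb_nonneg _ _) (hypProb_nonneg hp0 hq0 hp1 hq1 σ E)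
  constructor
  · have h1 := est_success m k M hM p q hp0 hq0 hp1 hq1 δ hδ f
    have h2 := est_success m k M hM p q hp0 hq0 hp1 hq1 δ hδ (fun E => negB (f E))
    have h3 : (1:ℝ) ≤ prEvent (2 * m) k p q (fun σ E => f E ≠ σ ∧ f E ≠ negB σ) +
        (∑ σ : Fin (2 * m) → Bool, ∑ E : KSet (2 * m) k → Bool,
          sigProb (2 * m) σ * hypProb p q σ E * (if f E = σ then 1 else 0)) +
        (∑ σ : Fin (2 * m) → Bool, ∑ E : KSet (2 * m) k → Bool,
          sigProb (2 * m) σ * hypProb p q σ E * (if negB (f E) = σ then 1 else 0)) := by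
      unfold prEvent
      refine (total_one m k p q).symm.le.trans ?_
      simp_rw [← Finset.sum_add_distrib]
      refine Finset.sum_le_sum fun σ _ => Finset.sum_le_sum fun E _ => ?_
      have hn := hnn σ E
      rw [← mul_add, ← mul_add]
      refine le_mul_of_one_le_right hn ?_
      by_cases ha : f E = σ
      · rw [if_pos ha]
        split_ifs <;> norm_num
      · by_cases hb : f E = negB σ
        · have hb' : negB (f E) = σ := by rw [hb, negB_negB]
          rw [if_pos hb', if_neg ha]
          split_ifs <;> norm_num
        · rw [if_pos ⟨ha, hb⟩, if_neg ha]
          split_ifs <;> norm_num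
    linarith
  · unfold prEvent
    refine le_trans ?_ (total_one m k p q).le
    refine Finset.sum_le_sum fun σ _ => Finset.sum_le_sum fun E _ => ?_
    exact mul_le_of_le_one_right (hnn σ E) (by split_ifs <;> norm_num)

/-- block size -/
noncomputable def hsz (c' : ℝ) (m : ℕ) : ℕ := ⌊((2 * m : ℕ) : ℝ) ^ c'⌋₊

lemma hsz_le (c' : ℝ) (m : ℕ) : (hsz c' m : ℝ) ≤ ((2 * m : ℕ) : ℝ) ^ c' :=
  Nat.floor_le (by positivity)

lemma hsz_small (c' : ℝ) (hc' : c' < 1) (M : ℕ) :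
    ∀ᶠ m : ℕ in atTop, M * hsz c' m ≤ m := by
  have h1 : Tendsto (fun m : ℕ => (((2 * m : ℕ) : ℝ)) ^ (-(1 - c'))) atTop (nhds 0) :=
    (tendsto_rpow_neg_atTop (by linarith)).comp tendsto_2m
  have h2 := (h1.const_mul (2 * M : ℝ))
  rw [mul_zero] at h2
  filter_upwards [h2.eventually_le_const (by norm_num : (0:ℝ) < 1), eventually_ge_atTop 1]
    with m hm hm1
  have hx : (0:ℝ) < ((2 * m : ℕ) : ℝ) := by exact_mod_cast (by omega : 0 < 2 * m)
  have h3 : ((2 * m : ℕ) : ℝ) ^ c' = ((2 * m : ℕ) : ℝ) ^ (-(1 - c')) * ((2 * m : ℕ) : ℝ) := by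
    rw [← Real.rpow_add_one hx.ne']; congr 1; ring
  have h4 := hsz_le c' m
  have h5 : (M:ℝ) * hsz c' m ≤ m := by
    have h6 : (M:ℝ) * hsz c' m ≤ M * (((2 * m : ℕ) : ℝ) ^ (-(1 - c')) * ((2 * m : ℕ) : ℝ)) := by
      rw [← h3]; exact mul_le_mul_of_nonneg_left h4 (by positivity)
    refine h6.trans ?_
    have h7 := mul_le_mul_of_nonneg_right hm hx.le
    push_cast at h7 ⊢
    linarith
  exact_mod_cast h5

lemma hsz_exp (c c' : ℝ) (hc : 0 ≤ c) (hcc : c < c') :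
    Tendsto (fun m : ℕ => Real.exp (-(Real.exp (-c * Real.log ((2 * m : ℕ) : ℝ)) * hsz c' m / 2)))
      atTop (nhds 0) := by
  apply Real.tendsto_exp_neg_atTop_nhds_zero.comp
  apply Tendsto.atTop_div_const (by norm_num)
  have h1 : Tendsto (fun m : ℕ => ((2 * m : ℕ) : ℝ) ^ (c' - c) - 1) atTop atTop :=
    tendsto_atTop_add_const_right _ (-1) ((tendsto_rpow_atTop (by linarith)).comp tendsto_2m)
  refine tendsto_atTop_mono' _ ?_ h1
  filter_upwards [eventually_ge_atTop 1] with m hm1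
  have hx1 : (1:ℝ) ≤ ((2 * m : ℕ) : ℝ) := by exact_mod_cast (by omega : 1 ≤ 2 * m)
  have hx : (0:ℝ) < ((2 * m : ℕ) : ℝ) := by linarith
  have h2 : Real.exp (-c * Real.log ((2 * m : ℕ) : ℝ)) = ((2 * m : ℕ) : ℝ) ^ (-c) := by
    rw [Real.rpow_def_of_pos hx, mul_comm]
  rw [h2]
  have h3 : ((2 * m : ℕ) : ℝ) ^ c' - 1 ≤ hsz c' m := (Nat.sub_one_lt_floor _).le
  have h4 : ((2 * m : ℕ) : ℝ) ^ (-c) ≤ 1 := Real.rpow_le_one_of_one_le_of_nonpos hx1 (by linarith)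
  have h5 : 0 < ((2 * m : ℕ) : ℝ) ^ (-c) := Real.rpow_pos_of_pos hx _
  have h6 : ((2 * m : ℕ) : ℝ) ^ (c' - c) = ((2 * m : ℕ) : ℝ) ^ (-c) * ((2 * m : ℕ) : ℝ) ^ c' := by
    rw [← Real.rpow_add hx]; congr 1; ring
  rw [h6]
  nlinarith

lemma eta_tendsto (k : ℕ) (hk : 2 ≤ k) (c' : ℝ) (hc' : c' < 1) (M : ℕ) (γ : ℝ) (hγ : 0 ≤ γ) :
    Tendsto (fun m : ℕ => ((2 * (M * hsz c' m) * (2 * m - 2).choose (k - 2) : ℕ) : ℝ) *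
      pParam k γ (2 * m)) atTop (nhds 0) := by
  have h1 : Tendsto (fun x : ℝ => x ^ c' * Real.log x / (x - 1)) atTop (nhds 0) := by
    have a1 : (fun x : ℝ => Real.log x) =o[atTop] (fun x : ℝ => x ^ (1 - c')) :=
      isLittleO_log_rpow_atTop (by linarith)
    have a2 : (fun x : ℝ => x ^ c' * Real.log x) =o[atTop] (fun x : ℝ => x ^ c' * x ^ (1 - c')) :=
      (Asymptotics.isBigO_refl _ _).mul_isLittleO a1
    have a3 : (fun x : ℝ => x ^ c' * x ^ (1 - c')) =O[atTop] (fun x : ℝ => x - 1) := by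
      apply Asymptotics.IsBigO.of_bound 2
      filter_upwards [eventually_ge_atTop 2] with x hx
      rw [← Real.rpow_add (by linarith), add_sub_cancel, Real.rpow_one,
        Real.norm_of_nonneg (by linarith), Real.norm_of_nonneg (by linarith)]
      linarith
    exact (a2.trans_isBigO a3).tendsto_div_nhds_zero
  have h2 := (h1.comp tendsto_2m).const_mul (2 * M * (k - 1 : ℕ) * γ : ℝ)
  rw [mul_zero] at h2
  have hp : ∀ m : ℕ, 0 ≤ pParam k γ (2 * m) := fun m =>
    div_nonneg (mul_nonneg hγ (Real.log_natCast_nonneg _)) (Nat.cast_nonneg _)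
  refine squeeze_zero' ?_ ?_ h2
  · filter_upwards with m
    exact mul_nonneg (Nat.cast_nonneg _) (hp m)
  · filter_upwards [eventually_ge_atTop k] with m hm
    have hch : (2 * m - 1) * (2 * m - 2).choose (k - 2) = (k - 1) * (2 * m - 1).choose (k - 1) := by
      obtain ⟨a, rfl⟩ : ∃ a, k = a + 2 := ⟨k - 2, by omega⟩
      obtain ⟨b, hb⟩ : ∃ b, 2 * m = b + 2 := ⟨2 * m - 2, by omega⟩
      rw [hb]
      have h := Nat.add_one_mul_choose_eq b a
      have e1 : a + 2 - 1 = a + 1 := by omega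
      have e2 : b + 2 - 1 = b + 1 := by omega
      rw [e1, e2, Nat.add_sub_cancel, Nat.add_sub_cancel]
      linarith
    have hx2 : (0:ℝ) < ((2 * m : ℕ) : ℝ) - 1 := by
      have : (2:ℝ) ≤ ((2 * m : ℕ) : ℝ) := by exact_mod_cast (by omega : 2 ≤ 2 * m)
      linarith
    have hch' : (((2 * m : ℕ) : ℝ) - 1) * ((2 * m - 2).choose (k - 2) : ℝ) =
        ((k - 1 : ℕ) : ℝ) * ((2 * m - 1).choose (k - 1) : ℝ) := by
      have : ((2 * m : ℕ) : ℝ) - 1 = ((2 * m - 1 : ℕ) : ℝ) := by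
        rw [Nat.cast_sub (by omega)]; simp
      rw [this]; exact_mod_cast hch
    have hB0 : (0:ℝ) < ((2 * m - 1).choose (k - 1) : ℝ) := by
      exact_mod_cast Nat.choose_pos (by omega)
    have hL := Real.log_natCast_nonneg (2 * m)
    have key : ((2 * m - 2).choose (k - 2) : ℝ) * pParam k γ (2 * m) =
        (k - 1 : ℕ) * γ * (Real.log ((2 * m : ℕ) : ℝ) / (((2 * m : ℕ) : ℝ) - 1)) := by
      have : ((2 * m - 2).choose (k - 2) : ℝ) =
          ((k - 1 : ℕ) : ℝ) * ((2 * m - 1).choose (k - 1) : ℝ) / (((2 * m : ℕ) : ℝ) - 1) := by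
        rw [eq_div_iff hx2.ne', mul_comm]; exact hch'
      rw [this]
      unfold pParam
      field_simp
    have e3 : ((2 * (M * hsz c' m) * (2 * m - 2).choose (k - 2) : ℕ) : ℝ) * pParam k γ (2 * m)
        = 2 * M * hsz c' m * (((2 * m - 2).choose (k - 2) : ℝ) * pParam k γ (2 * m)) := by
      rw [Nat.cast_mul, Nat.cast_mul, Nat.cast_mul]; push_cast; ring
    rw [e3, key]
    simp only [Function.comp]
    have h5 : 0 ≤ Real.log ((2 * m : ℕ) : ℝ) / (((2 * m : ℕ) : ℝ) - 1) := div_nonneg hL hx2.le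
    have h6 := hsz_le c' m
    calc 2 * M * (hsz c' m : ℝ) * ((k - 1 : ℕ) * γ *
          (Real.log ((2 * m : ℕ) : ℝ) / (((2 * m : ℕ) : ℝ) - 1)))
        = (2 * M * (k - 1 : ℕ) * γ * (Real.log ((2 * m : ℕ) : ℝ) / (((2 * m : ℕ) : ℝ) - 1))) *
          hsz c' m := by ring
      _ ≤ (2 * M * (k - 1 : ℕ) * γ * (Real.log ((2 * m : ℕ) : ℝ) / (((2 * m : ℕ) : ℝ) - 1))) *
          ((2 * m : ℕ) : ℝ) ^ c' := by
          apply mul_le_mul_of_nonneg_left h6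
          positivity
      _ = _ := by ring

end Final

/-- If `I(α,β) < 1` then exact recovery in `HSBM(n,p,q;k)` is impossible:
every estimator fails with probability `1 - o(1)` as `n = 2m → ∞`. -/
theorem hsbm_exact_recovery_impossible (k : ℕ) (hk : 2 ≤ k) (α β : ℝ) (hα : 0 < α) (hβ : 0 < β)
    (hI : (Real.sqrt α - Real.sqrt β) ^ 2 / 2 ^ (k - 1) < 1) :
    ∀ est : (m : ℕ) → (KSet (2 * m) k → Bool) → (Fin (2 * m) → Bool),
      Tendsto (fun m : ℕ =>
          prEvent (2 * m) k (pParam k α (2 * m)) (pParam k β (2 * m))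
            (fun σ E => est m E ≠ σ ∧ est m E ≠ negB σ))
        atTop (nhds 1) := by
  intro est
  obtain ⟨c, hc1, hc2⟩ := exists_between hI
  obtain ⟨c', hc'1, hc'2⟩ := exists_between hc2
  have hc0 : 0 ≤ c := le_trans (by positivity) hc1.le
  set γ := max α β with hγ
  have hγ0 : 0 ≤ γ := hα.le.trans (le_max_left _ _)
  -- the basic estimate, for fixed `M`
  have key : ∀ M : ℕ, 0 < M → ∃ δ : ℕ → ℝ, Tendsto δ atTop (nhds 0) ∧ ∀ᶠ m : ℕ in atTop,
      1 - 2 * (2 / M + δ m) ≤ prEvent (2 * m) k (pParam k α (2 * m)) (pParam k β (2 * m))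
            (fun σ E => est m E ≠ σ ∧ est m E ≠ negB σ) ∧
      prEvent (2 * m) k (pParam k α (2 * m)) (pParam k β (2 * m))
            (fun σ E => est m E ≠ σ ∧ est m E ≠ negB σ) ≤ 1 := by
    intro M hM
    set η : ℕ → ℝ := fun m => ((2 * (M * hsz c' m) * (2 * m - 2).choose (k - 2) : ℕ) : ℝ) *
      pParam k γ (2 * m) with hη
    have hηt : Tendsto η atTop (nhds 0) := eta_tendsto k hk c' hc'2 M γ hγ0
    refine ⟨fun m => 2 * M * (Real.exp (-(Real.exp (-c * Real.log ((2 * m : ℕ) : ℝ)) *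
      hsz c' m / 2)) + 2 * η m), ?_, ?_⟩
    · have := (((hsz_exp c c' hc0 hc'1).add (hηt.const_mul 2)).const_mul (2 * M : ℝ))
      simpa using this
    · have hst : Tendsto (fun m : ℕ => pParam k γ (2 * m)) atTop (nhds 0) := by
        have := (z_tendsto k hk).const_mul γ
        rw [mul_zero] at this
        refine this.congr fun m => ?_
        unfold pParam
        rw [mul_div_assoc]
      have hh0 : ∀ᶠ m : ℕ in atTop, 0 < hsz c' m := by
        filter_upwards [eventually_ge_atTop 1] with m hm
        apply Nat.floor_pos.2
        apply Real.one_le_rpow _ (by linarith)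
        exact_mod_cast (by omega : 1 ≤ 2 * m)
      filter_upwards [hsz_small c' hc'2 M, r_lower k hk α β hα hβ c hc1,
        hηt.eventually_le_const (by norm_num : (0:ℝ) < 1 / 4),
        hst.eventually_le_const (by norm_num : (0:ℝ) < 1), hh0] with m hMh hr hη4 hs1 hh0
      have hmono : ∀ a b : ℝ, a ≤ b → pParam k a (2 * m) ≤ pParam k b (2 * m) := by
        intro a b hab
        unfold pParam
        apply div_le_div_of_nonneg_right _ (Nat.cast_nonneg _)
        exact mul_le_mul_of_nonneg_right hab (Real.log_natCast_nonneg _)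
      have hpn : ∀ a : ℝ, 0 ≤ a → 0 ≤ pParam k a (2 * m) := fun a ha =>
        div_nonneg (mul_nonneg ha (Real.log_natCast_nonneg _)) (Nat.cast_nonneg _)
      have hps := hmono α γ (le_max_left _ _)
      have hqs := hmono β γ (le_max_right _ _)
      apply fail_bounds m k M hM _ _ (hpn α hα.le) (hpn β hβ.le) (hps.trans hs1) (hqs.trans hs1)
      intro σ hσ
      have hrr := hr ((m - M * hsz c' m).choose (k - 1))
        (Nat.choose_le_choose _ (Nat.sub_le _ _))
      have hng := not_good_le hk m M (hsz c' m) hM hh0 hMh (pParam k α (2 * m))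
        (pParam k β (2 * m)) (pParam k γ (2 * m)) (hpn α hα.le) (hpn β hβ.le) hps hqs hs1 _
        ((Real.exp_nonneg _).trans hrr) rfl (η m) rfl hη4 σ hσ
      refine hng.trans ?_
      apply mul_le_mul_of_nonneg_left _ (by positivity)
      apply add_le_add_left
      apply Real.exp_le_exp.2
      have := mul_le_mul_of_nonneg_right hrr (Nat.cast_nonneg (α := ℝ) (hsz c' m))
      linarith
  rw [tendsto_order]
  constructor
  · intro a ha
    obtain ⟨M, hM⟩ := exists_nat_gt (8 / (1 - a))
    have h1a : 0 < 1 - a := by linarith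
    have hMr : (0:ℝ) < M := lt_trans (by positivity) hM
    have hM0 : 0 < M := by exact_mod_cast hMr
    obtain ⟨δ, hδ, hev⟩ := key M hM0
    have hMa : 4 / (M:ℝ) < (1 - a) / 2 := by
      rw [div_lt_iff₀ h1a] at hM
      rw [div_lt_iff₀ hMr]
      linarith
    filter_upwards [hev, hδ.eventually_lt_const (by linarith : (0:ℝ) < (1 - a) / 4)] with m h1 h2
    have h3 := h1.1
    have h4 : 2 * (2 / (M:ℝ)) = 4 / M := by ring
    linarith
  · intro a ha
    obtain ⟨δ, hδ, hev⟩ := key 1 one_pos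
    filter_upwards [hev] with m h1
    linarith [h1.2]
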